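/- arXiv:2508.01243 — 3 statements merged into one kernel-verified Lean document; each statement's English description precedes it below -/
import Mathlib

section
/- For all ν, μ1, μ2 ∈ P_2(ℝ^d), the infimum defining the ν-based Wasserstein discrepancy is attained: there exists ρ* ∈ Γ(ν, μ1, μ2) such that ∫ ‖x1−x2‖² dρ*(y,x1,x2) = inf_{ρ ∈ Γ(ν,μ1,μ2)} ∫ ‖x1−x2‖² dρ(y,x1,x2). -/
open MeasureTheory Filter Topology ProbabilityTheory
open scoped ENNReal RealInnerProductSpace Classical

noncomputable section

/-- Euclidean space ℝ^d. -/
abbrev Euc (d : ℕ) : Type := EuclideanSpace ℝ (Fin d)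

/-- `P2` : Borel probability measures with finite second moment. -/
def P2 {E : Type*} [NormedAddCommGroup E] [MeasurableSpace E] : Set (Measure E) :=
  {μ | IsProbabilityMeasure μ ∧ Integrable (fun x => ‖x‖ ^ 2) μ}

/-- Couplings between two measures. -/
def Coupling {E F : Type*} [MeasurableSpace E] [MeasurableSpace F]
    (μ : Measure E) (ν : Measure F) : Set (Measure (E × F)) :=
  {π | IsProbabilityMeasure π ∧ π.map Prod.fst = μ ∧ π.map Prod.snd = ν}

/-- Quadratic transport cost of a plan. -/
def tCost {E : Type*} [NormedAddCommGroup E] [MeasurableSpace E]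
    (π : Measure (E × E)) : ℝ :=
  ∫ p, ‖p.1 - p.2‖ ^ 2 ∂π

/-- Squared 2-Wasserstein distance. -/
def W2sq {E : Type*} [NormedAddCommGroup E] [MeasurableSpace E] (μ ν : Measure E) : ℝ :=
  sInf (tCost '' Coupling μ ν)

/-- 2-Wasserstein distance. -/
def W2 {E : Type*} [NormedAddCommGroup E] [MeasurableSpace E] (μ ν : Measure E) : ℝ :=
  Real.sqrt (W2sq μ ν)

/-- Optimal transport plans for the quadratic cost. -/
def OptPlan {E : Type*} [NormedAddCommGroup E] [MeasurableSpace E]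
    (μ ν : Measure E) : Set (Measure (E × E)) :=
  {π | π ∈ Coupling μ ν ∧ tCost π = W2sq μ ν}

/-- `Gamma ν μ1 μ2` : probability measures on `E × E × E` whose (1,2)-marginal is an optimal
plan between `ν` and `μ1` and whose (1,3)-marginal is an optimal plan between `ν` and `μ2`. -/
def Gamma {E : Type*} [NormedAddCommGroup E] [MeasurableSpace E]
    (ν μ1 μ2 : Measure E) : Set (Measure (E × E × E)) :=
  {ρ | IsProbabilityMeasure ρ ∧
    ρ.map (fun p => (p.1, p.2.1)) ∈ OptPlan ν μ1 ∧
    ρ.map (fun p => (p.1, p.2.2)) ∈ OptPlan ν μ2}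

/-- Cost `∫ ‖x1 − x2‖² dρ(y, x1, x2)` of a 3-plan. -/
def pivotCost {E : Type*} [NormedAddCommGroup E] [MeasurableSpace E]
    (ρ : Measure (E × E × E)) : ℝ :=
  ∫ p, ‖p.2.1 - p.2.2‖ ^ 2 ∂ρ

/-- Squared ν-based Wasserstein discrepancy. -/
def Wnusq {E : Type*} [NormedAddCommGroup E] [MeasurableSpace E]
    (ν μ1 μ2 : Measure E) : ℝ :=
  sInf (pivotCost '' Gamma ν μ1 μ2)

/-- ν-based Wasserstein discrepancy. -/
def Wnu {E : Type*} [NormedAddCommGroup E] [MeasurableSpace E]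
    (ν μ1 μ2 : Measure E) : ℝ :=
  Real.sqrt (Wnusq ν μ1 μ2)

/-- Weak convergence of a sequence of measures (against bounded continuous functions). -/
def WeakConv {E : Type*} [MeasurableSpace E] [TopologicalSpace E]
    (μs : ℕ → Measure E) (μ : Measure E) : Prop :=
  ∀ f : BoundedContinuousFunction E ℝ,
    Tendsto (fun n => ∫ x, f x ∂(μs n)) atTop (𝓝 (∫ x, f x ∂μ))

/-- Quantile function (pseudo-inverse c.d.f.) of a measure on ℝ. -/
def quantile (ν : Measure ℝ) (t : ℝ) : ℝ :=
  sInf {s : ℝ | ENNReal.ofReal t ≤ ν (Set.Iic s)}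

/-- Pushforward of `μ` by the projection `P_θ : x ↦ ⟪θ, x⟫`. -/
def projLine {d : ℕ} (θ : Euc d) (μ : Measure (Euc d)) : Measure ℝ :=
  μ.map (fun x => ⟪θ, x⟫)

/-- `μ_θ[μ1, μ2]` : the (unique) Wasserstein mean of `Q_θ#μ1` and `Q_θ#μ2`, given by the
explicit quantile formula `[(½ F_{ν1}^{[-1]} + ½ F_{ν2}^{[-1]})·θ]#L_{[0,1]}`. -/
def pivotMiddle {d : ℕ} (θ : Euc d) (μ1 μ2 : Measure (Euc d)) : Measure (Euc d) :=
  (volume.restrict (Set.Icc (0 : ℝ) 1)).map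
    (fun t => ((1 / 2) * quantile (projLine θ μ1) t
      + (1 / 2) * quantile (projLine θ μ2) t) • θ)

/-- Squared Pivot Sliced discrepancy. -/
def PSsq {d : ℕ} (θ : Euc d) (μ1 μ2 : Measure (Euc d)) : ℝ :=
  Wnusq (pivotMiddle θ μ1 μ2) μ1 μ2

/-- Pivot Sliced discrepancy. -/
def PS {d : ℕ} (θ : Euc d) (μ1 μ2 : Measure (Euc d)) : ℝ :=
  Real.sqrt (PSsq θ μ1 μ2)

/-- `π_θ[μ1, μ2]` : the unique optimal 1D plan between `P_θ#μ1` and `P_θ#μ2`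
(co-monotone quantile coupling). -/
def piTheta {d : ℕ} (θ : Euc d) (μ1 μ2 : Measure (Euc d)) : Measure (ℝ × ℝ) :=
  (volume.restrict (Set.Icc (0 : ℝ) 1)).map
    (fun t => (quantile (projLine θ μ1) t, quantile (projLine θ μ2) t))

/-- `Ω_θ(μ1, μ2)` : couplings of `μ1, μ2` whose projection by `(P_θ, P_θ)` is `π_θ[μ1, μ2]`. -/
def OmegaTheta {d : ℕ} (θ : Euc d) (μ1 μ2 : Measure (Euc d)) :
    Set (Measure (Euc d × Euc d)) :=
  {ω | ω ∈ Coupling μ1 μ2 ∧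
    ω.map (fun p => (⟪θ, p.1⟫, ⟪θ, p.2⟫)) = piTheta θ μ1 μ2}

/-- Squared constrained Wasserstein discrepancy `CW_θ²`. -/
def CWsq {d : ℕ} (θ : Euc d) (μ1 μ2 : Measure (Euc d)) : ℝ :=
  sInf (tCost '' OmegaTheta θ μ1 μ2)

/-- Wasserstein means: minimisers of `μ ↦ W₂²(μ1, μ) + W₂²(μ, μ2)` over `P2`. -/
def WMean {d : ℕ} (μ1 μ2 : Measure (Euc d)) : Set (Measure (Euc d)) :=
  {μ | μ ∈ (P2 : Set (Measure (Euc d))) ∧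
    ∀ μ' ∈ (P2 : Set (Measure (Euc d))),
      W2sq μ1 μ + W2sq μ μ2 ≤ W2sq μ1 μ' + W2sq μ' μ2}

/-- Uniform empirical measure `1/n ∑ δ_{x_i}`. -/
def empMeasure {d n : ℕ} (x : Fin n → Euc d) : Measure (Euc d) :=
  (n : ℝ≥0∞)⁻¹ • ∑ i, Measure.dirac (x i)

/-!
Prokhorov's theorem makes the plans with prescribed marginals a weakly compact set, and the integral
of a nonnegative continuous cost is weakly lower semicontinuous, being a supremum of integrals of
bounded truncations. Hence optimal plans exist and form a weakly compact set. `Gamma ν μ1 μ2` is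
therefore weakly closed inside a compact set of plans, it is nonempty by gluing two optimal plans
along `ν`, and the lower semicontinuous functional `pivotCost` attains its infimum on it.
-/

section LowerSemicontinuity

variable {X : Type*} [TopologicalSpace X] [MeasurableSpace X] [OpensMeasurableSpace X]

lemma continuous_lintegral_of_le_coe {f : X → ℝ≥0∞} (hf : Continuous f) {C : NNReal}
    (hfC : ∀ x, f x ≤ C) :
    Continuous fun μ : ProbabilityMeasure X ↦ ∫⁻ x, f x ∂μ.toMeasure := by
  have hf_top (x : X) : f x ≠ ∞ := ne_top_of_le_ne_top ENNReal.coe_ne_top (hfC x)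
  have hf_toNNReal : Continuous fun x ↦ (f x).toNNReal :=
    ENNReal.continuousOn_toNNReal.comp_continuous hf hf_top
  have h_le (x : X) : (f x).toNNReal ≤ C := ENNReal.toNNReal_mono ENNReal.coe_ne_top (hfC x)
  let g : BoundedContinuousFunction X NNReal :=
    .mkOfBound ⟨_, hf_toNNReal⟩ C fun x y ↦
      abs_sub_le_of_nonneg_of_le (NNReal.coe_nonneg _) (h_le x) (NNReal.coe_nonneg _) (h_le y)
  have hg (x : X) : (g x : ℝ≥0∞) = f x := ENNReal.coe_toNNReal (hf_top x)
  simpa only [hg] using ProbabilityMeasure.continuous_lintegral_boundedContinuousFunction g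

lemma lowerSemicontinuous_lintegral {f : X → ℝ≥0∞} (hf : Continuous f) :
    LowerSemicontinuous fun μ : ProbabilityMeasure X ↦ ∫⁻ x, f x ∂μ.toMeasure := by
  have h_trunc (n : ℕ) : Continuous fun x ↦ min (f x) n := hf.min continuous_const
  have h_iSup (μ : ProbabilityMeasure X) :
      ∫⁻ x, f x ∂μ.toMeasure = ⨆ n : ℕ, ∫⁻ x, min (f x) n ∂μ.toMeasure := by
    rw [← lintegral_iSup (fun n ↦ (h_trunc n).measurable) fun m n hmn x ↦ by dsimp only; gcongr]
    simp only [← inf_iSup_eq, ENNReal.iSup_natCast, inf_top_eq]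
  simp only [h_iSup]
  exact lowerSemicontinuous_iSup fun n ↦
    (continuous_lintegral_of_le_coe (C := n) (h_trunc n)
      fun x ↦ min_le_right _ _).lowerSemicontinuous

lemma lowerSemicontinuousOn_integral {f : X → ℝ} (hf : Continuous f) (hf_nonneg : 0 ≤ f)
    {K : Set (ProbabilityMeasure X)} (hf_int : ∀ μ ∈ K, Integrable f μ.toMeasure) :
    LowerSemicontinuousOn (fun μ : ProbabilityMeasure X ↦ ∫ x, f x ∂μ.toMeasure) K := by
  intro μ hμ c hc
  rcases lt_or_ge c 0 with hc_neg | hc_nonneg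
  · exact Eventually.of_forall fun ρ ↦ hc_neg.trans_le (integral_nonneg hf_nonneg)
  have lt_integral_iff {ρ : ProbabilityMeasure X} (hρ : ρ ∈ K) :
      c < ∫ x, f x ∂ρ.toMeasure ↔
        ENNReal.ofReal c < ∫⁻ x, ENNReal.ofReal (f x) ∂ρ.toMeasure := by
    rw [← ofReal_integral_eq_lintegral_ofReal (hf_int ρ hρ) (ae_of_all _ hf_nonneg),
      ENNReal.ofReal_lt_ofReal_iff_of_nonneg hc_nonneg]
  have h_lsc := lowerSemicontinuous_lintegral (ENNReal.continuous_ofReal.comp hf)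
  filter_upwards [h_lsc.lowerSemicontinuousOn K μ hμ _ ((lt_integral_iff hμ).1 hc),
    self_mem_nhdsWithin] with ρ hρ hρK
  exact (lt_integral_iff hρK).2 hρ

variable {f : X → ℝ} {S : Set (Measure X)}

lemma exists_integral_eq_sInf_of_isCompact (hf : Continuous f) (hf_nonneg : 0 ≤ f)
    (hf_int : ∀ μ ∈ S, Integrable f μ) (hS_prob : ∀ μ ∈ S, IsProbabilityMeasure μ)
    (hS : IsCompact {μ : ProbabilityMeasure X | μ.toMeasure ∈ S}) (hS_nonempty : S.Nonempty) :
    ∃ μ ∈ S, ∫ x, f x ∂μ = sInf ((fun ρ ↦ ∫ x, f x ∂ρ) '' S) := by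
  have h_nonempty : {μ : ProbabilityMeasure X | μ.toMeasure ∈ S}.Nonempty :=
    let ⟨μ, hμ⟩ := hS_nonempty
    ⟨⟨μ, hS_prob μ hμ⟩, hμ⟩
  obtain ⟨μ, hμ, hμ_min⟩ := LowerSemicontinuousOn.exists_isMinOn h_nonempty hS
    (lowerSemicontinuousOn_integral hf hf_nonneg fun ρ hρ ↦ hf_int ρ hρ)
  refine ⟨μ, hμ, Eq.symm (IsLeast.csInf_eq ⟨⟨μ, hμ, rfl⟩, ?_⟩)⟩
  rintro _ ⟨ρ, hρ, rfl⟩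
  exact isMinOn_iff.1 hμ_min ⟨ρ, hS_prob ρ hρ⟩ hρ

lemma isCompact_setOf_integral_eq_sInf (hf : Continuous f) (hf_nonneg : 0 ≤ f)
    (hf_int : ∀ μ ∈ S, Integrable f μ)
    (hS : IsCompact {μ : ProbabilityMeasure X | μ.toMeasure ∈ S}) :
    IsCompact {μ : ProbabilityMeasure X | μ.toMeasure ∈ S ∧
      ∫ x, f x ∂μ.toMeasure = sInf ((fun ρ ↦ ∫ x, f x ∂ρ) '' S)} := by
  have h_lsc := lowerSemicontinuousOn_integral (K := {μ | μ.toMeasure ∈ S}) hf hf_nonneg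
    fun μ hμ ↦ hf_int μ hμ
  have h_bdd : BddBelow ((fun ρ ↦ ∫ x, f x ∂ρ) '' S) :=
    ⟨0, Set.forall_mem_image.2 fun ρ _ ↦ integral_nonneg hf_nonneg⟩
  convert h_lsc.isCompact_inter_preimage_Iic hS (sInf ((fun ρ ↦ ∫ x, f x ∂ρ) '' S)) using 1
  ext μ
  exact and_congr_right fun hμ ↦ ⟨le_of_eq, fun h ↦ h.antisymm (csInf_le h_bdd ⟨_, hμ, rfl⟩)⟩

end LowerSemicontinuity

section Couplings

variable {X Y Z : Type*} [MeasurableSpace X] [MeasurableSpace Y] [MeasurableSpace Z]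

lemma Coupling.nonempty (μ : Measure X) (ν : Measure Y) [IsProbabilityMeasure μ]
    [IsProbabilityMeasure ν] : (Coupling μ ν).Nonempty :=
  ⟨μ.prod ν, inferInstance, Measure.fst_prod, Measure.snd_prod⟩

lemma exists_measure_map_eq_of_fst_eq_fst [StandardBorelSpace Y] [Nonempty Y]
    [StandardBorelSpace Z] [Nonempty Z] {π₁ : Measure (X × Y)} {π₂ : Measure (X × Z)}
    [IsFiniteMeasure π₁] [IsFiniteMeasure π₂] (h : π₁.fst = π₂.fst) :
    ∃ ρ : Measure (X × Y × Z),
      ρ.map (fun p ↦ (p.1, p.2.1)) = π₁ ∧ ρ.map (fun p ↦ (p.1, p.2.2)) = π₂ := by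
  -- Given the first coordinate, make the other two conditionally independent.
  refine ⟨π₁.fst ⊗ₘ (π₁.condKernel ×ₖ π₂.condKernel), ?_, ?_⟩
  · calc
      _ = π₁.fst ⊗ₘ (π₁.condKernel ×ₖ π₂.condKernel).fst := by
        rw [Kernel.fst_eq, Measure.compProd_map measurable_fst]; rfl
      _ = π₁ := by rw [Kernel.fst_prod, π₁.disintegrate]
  · calc
      _ = π₁.fst ⊗ₘ (π₁.condKernel ×ₖ π₂.condKernel).snd := by
        rw [Kernel.snd_eq, Measure.compProd_map measurable_snd]; rfl
      _ = π₂ := by rw [Kernel.snd_prod, h, π₂.disintegrate]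

variable [TopologicalSpace X] [PolishSpace X] [BorelSpace X]
  [TopologicalSpace Y] [PolishSpace Y] [BorelSpace Y]

lemma isCompact_setOf_map_fst_mem_and_map_snd_mem {K : Set (ProbabilityMeasure X)}
    {L : Set (ProbabilityMeasure Y)} (hK : IsCompact K) (hL : IsCompact L) :
    IsCompact {π : ProbabilityMeasure (X × Y) |
      π.map measurable_fst.aemeasurable ∈ K ∧ π.map measurable_snd.aemeasurable ∈ L} := by
  let := TopologicalSpace.upgradeIsCompletelyMetrizable X
  let := TopologicalSpace.upgradeIsCompletelyMetrizable Y
  have h_closed : IsClosed {π : ProbabilityMeasure (X × Y) |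
      π.map measurable_fst.aemeasurable ∈ K ∧ π.map measurable_snd.aemeasurable ∈ L} :=
    (hK.isClosed.preimage (ProbabilityMeasure.continuous_map continuous_fst)).inter
      (hL.isClosed.preimage (ProbabilityMeasure.continuous_map continuous_snd))
  have hK_tight := isTightMeasureSet_of_isCompact_closure hK.closure
  have hL_tight := isTightMeasureSet_of_isCompact_closure hL.closure
  rw [← h_closed.closure_eq]
  refine isCompact_closure_of_isTightMeasureSet (.prodMk (hK_tight.subset ?_) (hL_tight.subset ?_))
  · rintro _ ⟨_, ⟨π, hπ, rfl⟩, rfl⟩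
    exact ⟨_, hπ.1, rfl⟩
  · rintro _ ⟨_, ⟨π, hπ, rfl⟩, rfl⟩
    exact ⟨_, hπ.2, rfl⟩

lemma isCompact_setOf_mem_coupling (μ : ProbabilityMeasure X) (ν : ProbabilityMeasure Y) :
    IsCompact {π : ProbabilityMeasure (X × Y) |
      π.toMeasure ∈ Coupling μ.toMeasure ν.toMeasure} := by
  convert isCompact_setOf_map_fst_mem_and_map_snd_mem
    (isCompact_singleton (x := μ)) (isCompact_singleton (x := ν)) using 1
  ext π
  exact ⟨fun h ↦ ⟨Subtype.ext h.2.1, Subtype.ext h.2.2⟩,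
    fun h ↦ ⟨inferInstance, congrArg Subtype.val h.1, congrArg Subtype.val h.2⟩⟩

end Couplings

section QuadraticCost

variable {E : Type*} [NormedAddCommGroup E] [MeasurableSpace E] {μ ν μ₁ μ₂ : Measure E}

lemma map_snd_mem_coupling_of_mem_gamma {ρ : Measure (E × E × E)} (hρ : ρ ∈ Gamma ν μ₁ μ₂) :
    ρ.map Prod.snd ∈ Coupling μ₁ μ₂ := by
  obtain ⟨_, ⟨⟨_, _, h₁⟩, _⟩, ⟨_, _, h₂⟩, _⟩ := hρ
  rw [Measure.map_map (by fun_prop) (by fun_prop)] at h₁ h₂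
  refine ⟨Measure.isProbabilityMeasure_map (by fun_prop), ?_, ?_⟩ <;>
    rw [Measure.map_map (by fun_prop) (by fun_prop)] <;> assumption

variable [BorelSpace E] [SecondCountableTopology E]

lemma memLp_two_id_of_mem_P2 (hμ : μ ∈ P2) : MemLp id 2 μ :=
  (memLp_two_iff_integrable_sq_norm aestronglyMeasurable_id).2 hμ.2

lemma integrable_norm_sub_sq_of_mem_coupling (hμ : μ ∈ P2) (hν : ν ∈ P2) {π : Measure (E × E)}
    (hπ : π ∈ Coupling μ ν) : Integrable (fun p ↦ ‖p.1 - p.2‖ ^ 2) π := by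
  obtain ⟨_, rfl, rfl⟩ := hπ
  have h_fst : MemLp Prod.fst 2 π :=
    (memLp_two_id_of_mem_P2 hμ).comp_of_map measurable_fst.aemeasurable
  have h_snd : MemLp Prod.snd 2 π :=
    (memLp_two_id_of_mem_P2 hν).comp_of_map measurable_snd.aemeasurable
  exact (h_fst.sub h_snd).integrable_norm_pow two_ne_zero

lemma integrable_norm_sub_sq_of_mem_gamma (h₁ : μ₁ ∈ P2) (h₂ : μ₂ ∈ P2)
    {ρ : Measure (E × E × E)} (hρ : ρ ∈ Gamma ν μ₁ μ₂) :
    Integrable (fun p ↦ ‖p.2.1 - p.2.2‖ ^ 2) ρ :=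
  (integrable_norm_sub_sq_of_mem_coupling h₁ h₂
    (map_snd_mem_coupling_of_mem_gamma hρ)).comp_measurable measurable_snd

variable [CompleteSpace E]

lemma OptPlan.nonempty (hμ : μ ∈ P2) (hν : ν ∈ P2) : (OptPlan μ ν).Nonempty := by
  have := hμ.1
  have := hν.1
  exact exists_integral_eq_sInf_of_isCompact (by fun_prop) (fun _ ↦ sq_nonneg _)
    (fun _ ↦ integrable_norm_sub_sq_of_mem_coupling hμ hν) (fun _ hπ ↦ hπ.1)
    (isCompact_setOf_mem_coupling ⟨μ, hμ.1⟩ ⟨ν, hν.1⟩) (Coupling.nonempty μ ν)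

lemma isCompact_setOf_mem_optPlan (hμ : μ ∈ P2) (hν : ν ∈ P2) :
    IsCompact {π : ProbabilityMeasure (E × E) | π.toMeasure ∈ OptPlan μ ν} :=
  isCompact_setOf_integral_eq_sInf (by fun_prop) (fun _ ↦ sq_nonneg _)
    (fun _ ↦ integrable_norm_sub_sq_of_mem_coupling hμ hν)
    (isCompact_setOf_mem_coupling ⟨μ, hμ.1⟩ ⟨ν, hν.1⟩)

lemma Gamma.nonempty (hν : ν ∈ P2) (h₁ : μ₁ ∈ P2) (h₂ : μ₂ ∈ P2) : (Gamma ν μ₁ μ₂).Nonempty := by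
  obtain ⟨π₁, hπ₁⟩ := OptPlan.nonempty hν h₁
  obtain ⟨π₂, hπ₂⟩ := OptPlan.nonempty hν h₂
  have := hπ₁.1.1
  have := hπ₂.1.1
  obtain ⟨ρ, rfl, rfl⟩ := exists_measure_map_eq_of_fst_eq_fst (hπ₁.1.2.1.trans hπ₂.1.2.1.symm)
  exact ⟨ρ, Measure.isProbabilityMeasure_of_map fun p ↦ (p.1, p.2.1), hπ₁, hπ₂⟩

lemma isClosed_setOf_mem_gamma (hν : ν ∈ P2) (h₁ : μ₁ ∈ P2) (h₂ : μ₂ ∈ P2) :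
    IsClosed {ρ : ProbabilityMeasure (E × E × E) | ρ.toMeasure ∈ Gamma ν μ₁ μ₂} := by
  have h_cont₁ : Continuous fun p : E × E × E ↦ (p.1, p.2.1) := by fun_prop
  have h_cont₂ : Continuous fun p : E × E × E ↦ (p.1, p.2.2) := by fun_prop
  convert ((isCompact_setOf_mem_optPlan hν h₁).isClosed.preimage
    (ProbabilityMeasure.continuous_map h_cont₁)).inter
      ((isCompact_setOf_mem_optPlan hν h₂).isClosed.preimage
        (ProbabilityMeasure.continuous_map h_cont₂)) using 1
  ext ρ
  exact and_iff_right inferInstance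

lemma isCompact_setOf_mem_gamma (hν : ν ∈ P2) (h₁ : μ₁ ∈ P2) (h₂ : μ₂ ∈ P2) :
    IsCompact {ρ : ProbabilityMeasure (E × E × E) | ρ.toMeasure ∈ Gamma ν μ₁ μ₂} := by
  refine (isCompact_setOf_map_fst_mem_and_map_snd_mem (isCompact_singleton (x := ⟨ν, hν.1⟩))
    (isCompact_setOf_mem_coupling ⟨μ₁, h₁.1⟩ ⟨μ₂, h₂.1⟩)).of_isClosed_subset
      (isClosed_setOf_mem_gamma hν h₁ h₂) fun ρ hρ ↦
        ⟨Subtype.ext ?_, map_snd_mem_coupling_of_mem_gamma hρ⟩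
  have h_fst := hρ.2.1.1.2.1
  rwa [Measure.map_map (by fun_prop) (by fun_prop)] at h_fst

end QuadraticCost

theorem Wnusq_inf_attained_general {E : Type*} [NormedAddCommGroup E] [CompleteSpace E]
    [SecondCountableTopology E] [MeasurableSpace E] [BorelSpace E] {ν μ₁ μ₂ : Measure E}
    (hν : ν ∈ P2) (h₁ : μ₁ ∈ P2) (h₂ : μ₂ ∈ P2) :
    ∃ ρ ∈ Gamma ν μ₁ μ₂, pivotCost ρ = Wnusq ν μ₁ μ₂ :=
  exists_integral_eq_sInf_of_isCompact (by fun_prop) (fun _ ↦ sq_nonneg _)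
    (fun _ ↦ integrable_norm_sub_sq_of_mem_gamma h₁ h₂) (fun _ hρ ↦ hρ.1)
    (isCompact_setOf_mem_gamma hν h₁ h₂) (Gamma.nonempty hν h₁ h₂)

/-- the infimum defining the ν-based Wasserstein discrepancy is attained. -/
theorem Wnusq_inf_attained {d : ℕ} (ν μ1 μ2 : Measure (Euc d))
    (hν : ν ∈ (P2 : Set (Measure (Euc d)))) (h1 : μ1 ∈ (P2 : Set (Measure (Euc d))))
    (h2 : μ2 ∈ (P2 : Set (Measure (Euc d)))) :
    ∃ ρstar ∈ Gamma ν μ1 μ2, pivotCost ρstar = Wnusq ν μ1 μ2 := by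
  exact Wnusq_inf_attained_general hν h1 h2

end
end

section
/- Let ν, μ1, μ2 ∈ P_2(ℝ^d). Then W_ν²(μ1, μ2) = min over pairs γ1 ∈ Π*(ν, μ1), γ2 ∈ Π*(ν, μ2) of ∫_{ℝ^d} W_2²(γ1^y, γ2^y) dν(y), where for i ∈ {1,2}, (γ_i^y)_{y ∈ ℝ^d} is the disintegration (conditional kernel) of γ_i with respect to its first marginal ν, i.e. γ_i(dy, dx) = ν(dy) γ_i^y(dx); moreover the minimum on the right-hand side is attained. -/
open MeasureTheory Filter Topology ProbabilityTheory
open scoped ENNReal RealInnerProductSpace Classical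

noncomputable section

/-!
A measure with `(1,2)`- and `(1,3)`-marginals `ν ⊗ₘ κ₁` and `ν ⊗ₘ κ₂` is of the form `ν ⊗ₘ K` where
`K y` couples `κ₁ y` and `κ₂ y` for `ν`-almost every `y`, so its cost is at least the integral of
the fibrewise transport costs. For the reverse inequality, measurable selection of optimal plans is
avoided. Taking marginals is a proper map for weak convergence (tightness), so both the fibrewise
transport cost and the least cost of a glued plan are lower semicontinuous, as minima of a lower
semicontinuous functional over the fibres of a proper map. Approximating `y ↦ (κ₁ y, κ₂ y)` and its
transport cost by evaluating them at countably many points, one glues with one optimal plan per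
point and lets the approximation converge.

The same properness makes the set of gluings of optimal plans compact, so the infimum defining the
discrepancy is attained; disintegrating a minimiser gives the optimal pair of plans.
-/

section WeakTopology

/-- A countable subbasis of the topology of weak convergence on `ProbabilityMeasure X`: the sets
`{μ | q < μ U}` where `U` is a finite union of members of a countable basis of `X` and `q` runs
through a countable dense set. -/
def weakSubbasis (X : Type*) [TopologicalSpace X] [SecondCountableTopology X] [MeasurableSpace X] :
    Set (Set (ProbabilityMeasure X)) :=
  Set.image2 (fun T n => {μ | TopologicalSpace.denseSeq NNReal n < μ (⋃₀ T)})
    {T | T.Finite ∧ T ⊆ TopologicalSpace.countableBasis X} Set.univ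

lemma countable_weakSubbasis {X : Type*} [TopologicalSpace X] [SecondCountableTopology X]
    [MeasurableSpace X] : (weakSubbasis X).Countable :=
  (Set.countable_ofPred_finite_subset (TopologicalSpace.countable_countableBasis X)).image2
    Set.countable_univ _

variable {X : Type*} [TopologicalSpace X] [MeasurableSpace X]

lemma exists_mem_weakSubbasis_of_lt [SecondCountableTopology X] {μ : ProbabilityMeasure X}
    {G : Set X} (hG : IsOpen G) {r : NNReal} (hr : r < μ G) :
    ∃ V ∈ weakSubbasis X, μ ∈ V ∧ ∀ ν ∈ V, r < ν G := by
  obtain ⟨T, hTbasis, hrT, hTG⟩ := μ.exists_lt_measure_biUnion_of_isOpen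
    (S := TopologicalSpace.countableBasis X) (fun u hu x hx =>
      let ⟨t, ht, hxt, htu⟩ :=
        (TopologicalSpace.isBasis_countableBasis X).exists_subset_of_mem_open hx hu
      ⟨t, ht, (TopologicalSpace.isOpen_of_mem_countableBasis ht).mem_nhds hxt, htu⟩) hG hr
  have hunion : ⋃ t ∈ T, t = ⋃₀ (T : Set (Set X)) := Set.sUnion_eq_biUnion.symm
  rw [hunion] at hrT hTG
  obtain ⟨_, ⟨n, rfl⟩, hrn, hnT⟩ :=
    (TopologicalSpace.denseRange_denseSeq NNReal).exists_between hrT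
  exact ⟨_, ⟨T, ⟨T.finite_toSet, hTbasis⟩, n, trivial, rfl⟩, hnT,
    fun ν hν => (hrn.trans hν).trans_le (ν.apply_mono hTG)⟩

variable [OpensMeasurableSpace X]

lemma lowerSemicontinuous_probabilityMeasure_apply [HasOuterApproxClosed X] {G : Set X}
    (hG : IsOpen G) : LowerSemicontinuous fun μ : ProbabilityMeasure X => (μ : Measure X) G :=
  fun _ => lowerSemicontinuousAt_iff_le_liminf.2
    (ProbabilityMeasure.le_liminf_measure_open_of_tendsto tendsto_id hG)

lemma lowerSemicontinuous_lintegral_probabilityMeasure {f : X → ℝ≥0∞} (hf : Continuous f) :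
    LowerSemicontinuous fun μ : ProbabilityMeasure X => ∫⁻ x, f x ∂μ := by
  have htrunc_cont (n : ℕ) : Continuous fun x => (min (f x) n).toNNReal :=
    ENNReal.continuousOn_toNNReal.comp_continuous (by fun_prop) fun x => by simp
  have htrunc_le (n : ℕ) (x : X) : (min (f x) n).toNNReal ≤ n :=
    ENNReal.toNNReal_mono (ENNReal.natCast_ne_top n) (min_le_right _ _)
  let trunc (n : ℕ) : BoundedContinuousFunction X NNReal :=
    .mkOfBound ⟨_, htrunc_cont n⟩ n fun x y => by
      simpa [NNReal.dist_eq, Real.dist_eq] using Real.dist_le_of_mem_Icc (x' := 0) (y' := n)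
        ⟨NNReal.coe_nonneg _, mod_cast htrunc_le n x⟩ ⟨NNReal.coe_nonneg _, mod_cast htrunc_le n y⟩
  have htrunc_coe (n : ℕ) (x : X) : (trunc n x : ℝ≥0∞) = min (f x) n :=
    ENNReal.coe_toNNReal (by simp)
  have hsup (μ : ProbabilityMeasure X) : ∫⁻ x, f x ∂μ = ⨆ n : ℕ, ∫⁻ x, trunc n x ∂μ := by
    simp only [htrunc_coe]
    rw [← lintegral_iSup (fun n => (hf.min continuous_const).measurable) fun m n hmn x =>
      min_le_min_left _ (mod_cast hmn)]
    simp only [← inf_iSup_eq, ENNReal.iSup_natCast, inf_top_eq]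
  simp only [hsup]
  exact lowerSemicontinuous_iSup fun n =>
    (ProbabilityMeasure.continuous_lintegral_boundedContinuousFunction
      (trunc n)).lowerSemicontinuous

variable [SecondCountableTopology X]

lemma le_nhds_of_weakSubbasis [HasOuterApproxClosed X] {μ : ProbabilityMeasure X}
    {L : Filter (ProbabilityMeasure X)} [L.IsCountablyGenerated]
    (h : ∀ V ∈ weakSubbasis X, μ ∈ V → V ∈ L) : L ≤ 𝓝 μ := by
  refine tendsto_id'.1 (tendsto_of_forall_isOpen_le_liminf' fun G hG => ?_)
  refine ENNReal.le_of_forall_nnreal_lt fun r hr => ?_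
  rw [← ProbabilityMeasure.ennreal_coeFn_eq_coeFn_toMeasure, ENNReal.coe_lt_coe] at hr
  obtain ⟨V, hV, hμV, hVr⟩ := exists_mem_weakSubbasis_of_lt hG hr
  refine le_liminf_of_le (by isBoundedDefault) ?_
  filter_upwards [h V hV hμV] with ν hν
  rw [id, ← ProbabilityMeasure.ennreal_coeFn_eq_coeFn_toMeasure]
  exact_mod_cast (hVr ν hν).le

variable [HasOuterApproxClosed X]

lemma isOpen_of_mem_weakSubbasis {V : Set (ProbabilityMeasure X)}
    (hV : V ∈ weakSubbasis X) : IsOpen V := by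
  obtain ⟨T, ⟨-, hT⟩, n, -, rfl⟩ := hV
  have hopen : IsOpen (⋃₀ T) :=
    isOpen_sUnion fun t ht => TopologicalSpace.isOpen_of_mem_countableBasis (hT ht)
  convert (lowerSemicontinuous_probabilityMeasure_apply hopen).isOpen_preimage
    (TopologicalSpace.denseSeq NNReal n : ℝ≥0∞) using 1
  ext μ
  simp [← ProbabilityMeasure.ennreal_coeFn_eq_coeFn_toMeasure]

lemma probabilityMeasure_eq_generateFrom_weakSubbasis :
    (inferInstance : TopologicalSpace (ProbabilityMeasure X)) =
      TopologicalSpace.generateFrom (weakSubbasis X) := by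
  refine le_antisymm (le_generateFrom fun V hV => isOpen_of_mem_weakSubbasis hV) ?_
  refine (le_iff_nhds _ _).2 fun μ => ?_
  let t : TopologicalSpace (ProbabilityMeasure X) := .generateFrom (weakSubbasis X)
  have : @SecondCountableTopology _ t := ⟨⟨_, countable_weakSubbasis, rfl⟩⟩
  have : (@nhds _ t μ).IsCountablyGenerated := inferInstance
  exact le_nhds_of_weakSubbasis fun V hV hμV =>
    (TopologicalSpace.isOpen_generateFrom_of_mem hV).mem_nhds hμV

instance secondCountableTopology_probabilityMeasure :
    SecondCountableTopology (ProbabilityMeasure X) :=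
  ⟨⟨_, countable_weakSubbasis, probabilityMeasure_eq_generateFrom_weakSubbasis⟩⟩

instance opensMeasurableSpace_probabilityMeasure :
    OpensMeasurableSpace (ProbabilityMeasure X) := by
  refine ⟨?_⟩
  rw [borel_eq_generateFrom_of_subbasis probabilityMeasure_eq_generateFrom_weakSubbasis]
  refine MeasurableSpace.generateFrom_le ?_
  rintro _ ⟨T, ⟨-, hT⟩, n, -, rfl⟩
  have hmeas : MeasurableSet (⋃₀ T) :=
    (isOpen_sUnion fun t ht => TopologicalSpace.isOpen_of_mem_countableBasis (hT ht)).measurableSet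
  exact measurableSet_lt measurable_const
    ((Measure.measurable_coe hmeas).comp measurable_subtype_coe).ennreal_toNNReal

end WeakTopology

section FiberInf

/-- The value function `b ↦ inf {g a | f a = b}` of minimising `g` over the fibres of `f`. -/
def fiberInf {A B R : Type*} [InfSet R] (f : A → B) (g : A → R) (b : B) : R :=
  ⨅ a ∈ f ⁻¹' {b}, g a

variable {A B R : Type*} [CompleteLinearOrder R] {f : A → B} {g : A → R}

lemma fiberInf_apply_le (a : A) : fiberInf f g (f a) ≤ g a :=
  biInf_le g (Set.mem_preimage.2 rfl)

variable [TopologicalSpace A] [TopologicalSpace B]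

lemma exists_eq_fiberInf (hf : IsProperMap f) (hg : LowerSemicontinuous g) (a₀ : A) :
    ∃ a, f a = f a₀ ∧ g a = fiberInf f g (f a₀) := by
  obtain ⟨a, ha, hmin⟩ := (hg.lowerSemicontinuousOn (f ⁻¹' {f a₀})).exists_isMinOn
    (s := f ⁻¹' {f a₀}) ⟨a₀, Set.mem_singleton _⟩ (hf.isCompact_preimage isCompact_singleton)
  exact ⟨a, ha, le_antisymm (le_iInf₂ fun b hb => hmin hb) (iInf₂_le a ha)⟩

lemma isCompact_setOf_eq_fiberInf (hf : IsProperMap f) (hg : LowerSemicontinuous g) [T1Space B]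
    (b : B) : IsCompact {a | f a = b ∧ g a = fiberInf f g b} := by
  have hsublevel : {a | f a = b ∧ g a = fiberInf f g b} =
      f ⁻¹' {b} ∩ g ⁻¹' Set.Iic (fiberInf f g b) := by
    ext a
    exact and_congr_right fun ha => ⟨fun h => h.le, fun h => h.antisymm (iInf₂_le a ha)⟩
  rw [hsublevel]
  exact (hf.isCompact_preimage isCompact_singleton).inter_right (hg.isClosed_preimage _)

lemma isLeast_toReal_fiberInf {g : A → ℝ≥0∞} (hf : IsProperMap f) (hg : LowerSemicontinuous g)
    (a₀ : A) (hfin : ∀ a, f a = f a₀ → g a ≠ ∞) :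
    IsLeast ((fun a => (g a).toReal) '' (f ⁻¹' {f a₀})) (fiberInf f g (f a₀)).toReal := by
  constructor
  · obtain ⟨a, hfa, hga⟩ := exists_eq_fiberInf hf hg a₀
    exact ⟨a, hfa, congrArg ENNReal.toReal hga⟩
  · rintro _ ⟨a, hfa, rfl⟩
    exact ENNReal.toReal_mono (hfin a hfa) (iInf₂_le a hfa)

lemma lowerSemicontinuous_fiberInf (hf : IsProperMap f) (hg : LowerSemicontinuous g) :
    LowerSemicontinuous (fiberInf f g) := by
  refine lowerSemicontinuous_iff_isClosed_preimage.2 fun r => ?_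
  rcases eq_or_ne r ⊤ with rfl | hr
  · simp
  have hsublevel : fiberInf f g ⁻¹' Set.Iic r = f '' (g ⁻¹' Set.Iic r) := by
    ext b
    constructor
    · intro hb
      obtain ⟨a₀, rfl⟩ : ∃ a, f a = b := by
        by_contra! h
        exact hr (top_le_iff.1 (hb.trans' (le_iInf₂ fun a ha => absurd ha (h a))))
      obtain ⟨a, hfa, hga⟩ := exists_eq_fiberInf hf hg a₀
      exact ⟨a, hga.trans_le hb, hfa⟩
    · rintro ⟨a, ha, rfl⟩
      exact (fiberInf_apply_le a).trans ha
  rw [hsublevel]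
  exact hf.isClosedMap _ (hg.isClosed_preimage r)

end FiberInf

section Marginals

variable {X Y Z : Type*} [MeasurableSpace X] [MeasurableSpace Y] [MeasurableSpace Z]

/-- The two marginals of a probability measure on a product. -/
def marginals (π : ProbabilityMeasure (X × Z)) : ProbabilityMeasure X × ProbabilityMeasure Z :=
  (π.map measurable_fst.aemeasurable, π.map measurable_snd.aemeasurable)

/-- The `(1,2)`- and `(1,3)`-marginals of a probability measure on a triple product. -/
def pairMarginals (ρ : ProbabilityMeasure (Y × X × Z)) :
    ProbabilityMeasure (Y × X) × ProbabilityMeasure (Y × Z) :=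
  (ρ.map (f := Prod.map id Prod.fst) (by fun_prop), ρ.map (f := Prod.map id Prod.snd) (by fun_prop))

lemma marginals_comp_pairMarginals :
    (fun p : ProbabilityMeasure (Y × X) × ProbabilityMeasure (Y × Z) =>
        ((marginals p.1).1, (marginals p.1).2, (marginals p.2).2)) ∘ pairMarginals =
      Prod.map id marginals ∘ marginals := by
  funext ρ
  refine Prod.ext (Subtype.ext ?_) (Prod.ext (Subtype.ext ?_) (Subtype.ext ?_))
  · exact Measure.map_map measurable_fst (by fun_prop)
  · exact (Measure.map_map measurable_snd (measurable_id.prodMap measurable_fst)).trans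
      (Measure.map_map measurable_fst measurable_snd).symm
  · exact (Measure.map_map measurable_snd (measurable_id.prodMap measurable_snd)).trans
      (Measure.map_map measurable_snd measurable_snd).symm

section Continuity

variable [TopologicalSpace X] [BorelSpace X]
  [TopologicalSpace Z] [BorelSpace Z]

lemma continuous_marginals [SecondCountableTopologyEither X Z] :
    Continuous (marginals (X := X) (Z := Z)) :=
  (ProbabilityMeasure.continuous_map continuous_fst).prodMk
    (ProbabilityMeasure.continuous_map continuous_snd)

lemma continuous_pairMarginals [TopologicalSpace Y] [BorelSpace Y]
    [SecondCountableTopology X] [SecondCountableTopology Z] :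
    Continuous (pairMarginals (X := X) (Y := Y) (Z := Z)) :=
  (ProbabilityMeasure.continuous_map (by fun_prop)).prodMk
    (ProbabilityMeasure.continuous_map (by fun_prop))

end Continuity

variable [TopologicalSpace X] [PolishSpace X] [BorelSpace X]

lemma isTightMeasureSet_of_isCompact_probabilityMeasure {K : Set (ProbabilityMeasure X)}
    (hK : IsCompact K) : IsTightMeasureSet ((↑) '' K : Set (Measure X)) := by
  let := TopologicalSpace.upgradeIsCompletelyMetrizable X
  exact isTightMeasureSet_of_isCompact_closure hK.closure

variable [TopologicalSpace Z] [PolishSpace Z] [BorelSpace Z]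

lemma isProperMap_marginals : IsProperMap (marginals (X := X) (Z := Z)) := by
  refine isProperMap_iff_isCompact_preimage.2 ⟨continuous_marginals, fun K hK => ?_⟩
  refine IsCompact.of_isClosed_subset (isCompact_closure_of_isTightMeasureSet ?_)
    (hK.isClosed.preimage continuous_marginals) subset_closure
  refine IsTightMeasureSet.prodMk
    ((isTightMeasureSet_of_isCompact_probabilityMeasure (hK.image continuous_fst)).subset ?_)
    ((isTightMeasureSet_of_isCompact_probabilityMeasure (hK.image continuous_snd)).subset ?_)
  all_goals
    rintro _ ⟨_, ⟨π, hπ, rfl⟩, rfl⟩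
    exact ⟨_, ⟨_, hπ, rfl⟩, rfl⟩

variable [TopologicalSpace Y] [PolishSpace Y] [BorelSpace Y]

lemma isProperMap_pairMarginals : IsProperMap (pairMarginals (X := X) (Y := Y) (Z := Z)) := by
  have hcont : Continuous fun p : ProbabilityMeasure (Y × X) × ProbabilityMeasure (Y × Z) =>
      ((marginals p.1).1, (marginals p.1).2, (marginals p.2).2) :=
    (continuous_marginals.comp continuous_fst).fst.prodMk
      ((continuous_marginals.comp continuous_fst).snd.prodMk
        (continuous_marginals.comp continuous_snd).snd)
  refine isProperMap_of_comp_of_t2 continuous_pairMarginals hcont ?_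
  rw [marginals_comp_pairMarginals]
  exact (isProperMap_id.prodMap isProperMap_marginals).comp isProperMap_marginals

end Marginals

section Approximation

variable {Y S : Type*} [MeasurableSpace Y] [TopologicalSpace S]
  [TopologicalSpace.PseudoMetrizableSpace S] [SecondCountableTopology S] [MeasurableSpace S]
  [OpensMeasurableSpace S] {T : Y → S}

lemma exists_simpleFunc_tendsto_comp (hT : Measurable T) :
    ∃ σ : ℕ → SimpleFunc Y Y, ∀ y, Tendsto (fun n => T (σ n y)) atTop (𝓝 (T y)) := by
  have hrange : StronglyMeasurable (fun y => (⟨T y, y, rfl⟩ : Set.range T)) :=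
    hT.subtype_mk.stronglyMeasurable
  refine ⟨fun n => (hrange.approx n).map fun r => r.2.choose, fun y => ?_⟩
  convert (continuous_subtype_val.tendsto _).comp (hrange.tendsto_approx y) using 2 with n
  exact (hrange.approx n y).2.choose_spec

-- Since `τ n` is measurable for the discrete σ-algebra on its target, `g ∘ τ n` is measurable for
-- every function `g`, however chosen.
lemma exists_measurable_tendsto_comp (hT : Measurable T) {V : Y → ℝ≥0∞} (hV : Measurable V) :
    ∃ τ : ℕ → Y → Y, (∀ n, Measurable[_, ⊤] (τ n)) ∧
      (∀ y, Tendsto (fun n => T (τ n y)) atTop (𝓝 (T y))) ∧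
      ∀ n y, V (τ n y) ≤ V y + (n : ℝ≥0∞)⁻¹ := by
  obtain ⟨σ, hσ⟩ := exists_simpleFunc_tendsto_comp (hT.prodMk hV)
  have hgood (n : ℕ) (y : Y) : ∃ k, n ≤ k ∧ V (σ k y) ≤ V y + (n : ℝ≥0∞)⁻¹ := by
    rcases eq_or_ne (V y) ∞ with hy | hy
    · exact ⟨n, le_rfl, by simp [hy]⟩
    · have hlt : V y < V y + (n : ℝ≥0∞)⁻¹ := ENNReal.lt_add_right hy (by simp)
      exact ((eventually_ge_atTop n).and
        (((hσ y).snd_nhds.eventually_lt_const hlt).mono fun _ h => h.le)).exists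
  refine ⟨fun n y => σ (Nat.find (hgood n y)) y, fun n => ?_, fun y => ?_, fun n y => ?_⟩
  · have hV_comp (k : ℕ) : Measurable fun y => V (σ k y) := hV.comp (σ k).measurable
    exact @Measurable.find Y Y ⊤ _ (fun k => σ k)
      (fun k y => n ≤ k ∧ V (σ k y) ≤ V y + (n : ℝ≥0∞)⁻¹) _
      (fun k s _ => (σ k).measurableSet_preimage s)
      (fun k => (MeasurableSet.const _).inter (measurableSet_le (hV_comp k) (hV.add_const _)))
      (hgood n)
  · exact (hσ y).fst_nhds.comp
      (tendsto_atTop_mono (fun n => (Nat.find_spec (hgood n y)).1) tendsto_id)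
  · exact (Nat.find_spec (hgood n y)).2

end Approximation

section CompProd

variable {X Y Z : Type*} [MeasurableSpace X] [MeasurableSpace Y] [MeasurableSpace Z]

/-- A Markov kernel as a map into probability measures, so as to speak of weak convergence of its
values. -/
def kernelLaw (κ : Kernel Y X) [IsMarkovKernel κ] (y : Y) : ProbabilityMeasure X :=
  ⟨κ y, inferInstance⟩

/-- The probability measure `ν(dy) κ(y, dx)` on `Y × X`. -/
def compProdLaw (ν : Measure Y) [IsProbabilityMeasure ν] (κ : Kernel Y X) [IsMarkovKernel κ] :
    ProbabilityMeasure (Y × X) :=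
  ⟨ν ⊗ₘ κ, inferInstance⟩

lemma measurable_kernelLaw (κ : Kernel Y X) [IsMarkovKernel κ] : Measurable (kernelLaw κ) :=
  κ.measurable.subtype_mk

lemma marginals_kernelLaw (K : Kernel Y (X × Z)) [IsMarkovKernel K] (y : Y) :
    marginals (kernelLaw K y) = (kernelLaw K.fst y, kernelLaw K.snd y) :=
  Prod.ext (Subtype.ext (Kernel.fst_apply K y).symm) (Subtype.ext (Kernel.snd_apply K y).symm)

variable {ν : Measure Y} [IsProbabilityMeasure ν]

lemma exists_compProdLaw_eq [StandardBorelSpace X] {γ : ProbabilityMeasure (Y × X)}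
    (hγ : (γ : Measure (Y × X)).fst = ν) :
    ∃ κ : Kernel Y X, ∃ _ : IsMarkovKernel κ, compProdLaw ν κ = γ := by
  have : Nonempty X := (nonempty_of_isProbabilityMeasure (γ : Measure (Y × X))).map Prod.snd
  refine ⟨(γ : Measure (Y × X)).condKernel, inferInstance, Subtype.ext ?_⟩
  change ν ⊗ₘ _ = _
  rw [← hγ]
  exact (γ : Measure (Y × X)).disintegrate _

variable (ν)

lemma pairMarginals_compProdLaw (K : Kernel Y (X × Z)) [IsMarkovKernel K] :
    pairMarginals (compProdLaw ν K) = (compProdLaw ν K.fst, compProdLaw ν K.snd) := by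
  refine Prod.ext (Subtype.ext ?_) (Subtype.ext ?_)
  · change (ν ⊗ₘ K).map _ = ν ⊗ₘ K.fst
    rw [Kernel.fst_eq, Measure.compProd_map measurable_fst]
  · change (ν ⊗ₘ K).map _ = ν ⊗ₘ K.snd
    rw [Kernel.snd_eq, Measure.compProd_map measurable_snd]

lemma tendsto_compProdLaw [TopologicalSpace X] [TopologicalSpace Y] [OpensMeasurableSpace X]
    [OpensMeasurableSpace (Y × X)] {κs : ℕ → Kernel Y X} {κ : Kernel Y X}
    [∀ n, IsMarkovKernel (κs n)] [IsMarkovKernel κ]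
    (h : ∀ᵐ y ∂ν, Tendsto (fun n => kernelLaw (κs n) y) atTop (𝓝 (kernelLaw κ y))) :
    Tendsto (fun n => compProdLaw ν (κs n)) atTop (𝓝 (compProdLaw ν κ)) := by
  refine ProbabilityMeasure.tendsto_iff_forall_lintegral_tendsto.2 fun f => ?_
  have hf : Measurable fun p => (f p : ℝ≥0∞) := f.continuous.measurable.coe_nnreal_ennreal
  simp only [compProdLaw, ProbabilityMeasure.coe_mk, Measure.lintegral_compProd hf]
  refine tendsto_lintegral_of_dominated_convergence (fun _ => (nndist 0 f : ℝ≥0∞))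
    (fun n => hf.lintegral_kernel_prod_right') (fun n => Eventually.of_forall fun y => ?_)
    (by simp) ?_
  · calc ∫⁻ x, f (y, x) ∂κs n y
        ≤ ∫⁻ _, (nndist 0 f : ℝ≥0∞) ∂κs n y :=
          lintegral_mono fun x => ENNReal.coe_le_coe.2 (f.apply_le_nndist_zero (y, x))
      _ = nndist 0 f := by simp
  · filter_upwards [h] with y hy
    exact ProbabilityMeasure.tendsto_iff_forall_lintegral_tendsto.1 hy
      (f.compContinuous ⟨fun x => (y, x), by fun_prop⟩)

end CompProd

section TransportCost

variable {X Y Z : Type*} [MeasurableSpace X] [MeasurableSpace Y] [MeasurableSpace Z]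
  {c : X × Z → ℝ≥0∞}

/-- The optimal transport cost, for the cost function `c`, between the two components of `p`. -/
def transportCost (c : X × Z → ℝ≥0∞) :
    ProbabilityMeasure X × ProbabilityMeasure Z → ℝ≥0∞ :=
  fiberInf marginals fun π => ∫⁻ q, c q ∂π

/-- The least `c`-cost between the last two coordinates among the measures on `Y × X × Z` with
prescribed `(1,2)`- and `(1,3)`-marginals. -/
def glueCost (c : X × Z → ℝ≥0∞) :
    ProbabilityMeasure (Y × X) × ProbabilityMeasure (Y × Z) → ℝ≥0∞ :=
  fiberInf pairMarginals fun ρ => ∫⁻ q : Y × X × Z, c q.2 ∂ρ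

lemma transportCost_marginals_le (π : ProbabilityMeasure (X × Z)) :
    transportCost c (marginals π) ≤ ∫⁻ q, c q ∂π :=
  fiberInf_apply_le π

lemma glueCost_pairMarginals_le (ρ : ProbabilityMeasure (Y × X × Z)) :
    glueCost c (pairMarginals ρ) ≤ ∫⁻ q : Y × X × Z, c q.2 ∂ρ :=
  fiberInf_apply_le ρ

lemma marginals_prod (μ : ProbabilityMeasure X) (μ' : ProbabilityMeasure Z) :
    marginals (μ.prod μ') = (μ, μ') :=
  Prod.ext (Subtype.ext (by simp [marginals])) (Subtype.ext (by simp [marginals]))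

variable {ν : Measure Y} [IsProbabilityMeasure ν]
  {κ₁ : Kernel Y X} {κ₂ : Kernel Y Z} [IsMarkovKernel κ₁] [IsMarkovKernel κ₂]

lemma pairMarginals_compProdLaw_prod :
    pairMarginals (compProdLaw ν (κ₁ ×ₖ κ₂)) = (compProdLaw ν κ₁, compProdLaw ν κ₂) := by
  simp only [pairMarginals_compProdLaw, Kernel.fst_prod, Kernel.snd_prod]

lemma lintegral_transportCost_le [StandardBorelSpace X] [StandardBorelSpace Z]
    {ρ : ProbabilityMeasure (Y × X × Z)} (hc : Measurable c)
    (hρ : pairMarginals ρ = (compProdLaw ν κ₁, compProdLaw ν κ₂)) :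
    ∫⁻ y, transportCost c (kernelLaw κ₁ y, kernelLaw κ₂ y) ∂ν ≤
      ∫⁻ q : Y × X × Z, c q.2 ∂ρ := by
  obtain ⟨K, _, rfl⟩ : ∃ K, ∃ _ : IsMarkovKernel K, compProdLaw ν K = ρ := by
    refine exists_compProdLaw_eq ?_
    calc (ρ : Measure (Y × X × Z)).fst
        = ((pairMarginals ρ).1 : Measure (Y × X)).fst :=
          (Measure.map_map measurable_fst (measurable_id.prodMap measurable_fst)).symm
      _ = ν := by rw [hρ]; exact Measure.fst_compProd ν κ₁
  rw [pairMarginals_compProdLaw, Prod.ext_iff] at hρ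
  have hfst : K.fst =ᵐ[ν] κ₁ := Kernel.ae_eq_of_compProd_eq (congrArg Subtype.val hρ.1)
  have hsnd : K.snd =ᵐ[ν] κ₂ := Kernel.ae_eq_of_compProd_eq (congrArg Subtype.val hρ.2)
  calc ∫⁻ y, transportCost c (kernelLaw κ₁ y, kernelLaw κ₂ y) ∂ν
      ≤ ∫⁻ y, ∫⁻ q, c q ∂K y ∂ν := by
        refine lintegral_mono_ae ?_
        filter_upwards [hfst, hsnd] with y hy₁ hy₂
        have hmarginals : marginals (kernelLaw K y) = (kernelLaw κ₁ y, kernelLaw κ₂ y) := by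
          rw [marginals_kernelLaw]
          exact Prod.ext (Subtype.ext hy₁) (Subtype.ext hy₂)
        exact hmarginals ▸ transportCost_marginals_le (kernelLaw K y)
    _ = ∫⁻ q, c q.2 ∂(ν ⊗ₘ K) := (Measure.lintegral_compProd (hc.comp measurable_snd)).symm

variable [TopologicalSpace X] [PolishSpace X] [BorelSpace X]
  [TopologicalSpace Z] [PolishSpace Z] [BorelSpace Z]

lemma exists_lintegral_eq_transportCost (hc : Continuous c)
    (p : ProbabilityMeasure X × ProbabilityMeasure Z) :
    ∃ π, marginals π = p ∧ ∫⁻ q, c q ∂π = transportCost c p := by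
  simpa only [marginals_prod, transportCost] using exists_eq_fiberInf isProperMap_marginals
    (lowerSemicontinuous_lintegral_probabilityMeasure hc) (p.1.prod p.2)

lemma measurable_transportCost (hc : Continuous c) : Measurable (transportCost c) :=
  (lowerSemicontinuous_fiberInf isProperMap_marginals
    (lowerSemicontinuous_lintegral_probabilityMeasure hc)).measurable

variable (κ₁ κ₂)

lemma exists_measurable_lintegral_le_transportCost (hc : Continuous c) :
    ∃ Ks : ℕ → Kernel Y (X × Z), ∃ _ : ∀ n, IsMarkovKernel (Ks n),
      (∀ y, Tendsto (fun n => marginals (kernelLaw (Ks n) y)) atTop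
        (𝓝 (kernelLaw κ₁ y, kernelLaw κ₂ y))) ∧
      ∀ n y, ∫⁻ q, c q ∂Ks n y ≤
        transportCost c (kernelLaw κ₁ y, kernelLaw κ₂ y) + (n : ℝ≥0∞)⁻¹ := by
  let T y := (kernelLaw κ₁ y, kernelLaw κ₂ y)
  have hT : Measurable T := (measurable_kernelLaw κ₁).prodMk (measurable_kernelLaw κ₂)
  obtain ⟨τ, hτ, hT_tendsto, hcost_le⟩ :=
    exists_measurable_tendsto_comp hT ((measurable_transportCost hc).comp hT)
  choose opt hopt_marginals hopt_cost using fun y => exists_lintegral_eq_transportCost hc (T y)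
  refine ⟨fun n => ⟨fun y => opt (τ n y),
    (measurable_from_top (f := fun y => (opt y : Measure (X × Z)))).comp (hτ n)⟩,
    fun n => ⟨fun y => (opt (τ n y)).2⟩, fun y => ?_, fun n y => ?_⟩
  · exact (hT_tendsto y).congr fun n => (hopt_marginals (τ n y)).symm
  · exact (hopt_cost (τ n y)).trans_le (hcost_le n y)

variable [TopologicalSpace Y] [PolishSpace Y] [BorelSpace Y]

lemma lowerSemicontinuous_glueCost (hc : Continuous c) :
    LowerSemicontinuous (glueCost (Y := Y) c) :=
  lowerSemicontinuous_fiberInf isProperMap_pairMarginals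
    (lowerSemicontinuous_lintegral_probabilityMeasure (hc.comp continuous_snd))

variable (ν)

lemma glueCost_compProdLaw_le (hc : Continuous c) :
    glueCost c (compProdLaw ν κ₁, compProdLaw ν κ₂) ≤
      ∫⁻ y, transportCost c (kernelLaw κ₁ y, kernelLaw κ₂ y) ∂ν := by
  obtain ⟨Ks, _, hKs_tendsto, hKs_cost⟩ :=
    exists_measurable_lintegral_le_transportCost κ₁ κ₂ hc
  simp only [marginals_kernelLaw] at hKs_tendsto
  have hglue_tendsto : Tendsto (fun n => pairMarginals (compProdLaw ν (Ks n)))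
      atTop (𝓝 (compProdLaw ν κ₁, compProdLaw ν κ₂)) := by
    simp only [pairMarginals_compProdLaw]
    exact (tendsto_compProdLaw ν (.of_forall fun y => (hKs_tendsto y).fst_nhds)).prodMk_nhds
      (tendsto_compProdLaw ν (.of_forall fun y => (hKs_tendsto y).snd_nhds))
  have hcost_le (n : ℕ) : ∫⁻ q : Y × X × Z, c q.2 ∂(compProdLaw ν (Ks n) : Measure _) ≤
      ∫⁻ y, transportCost c (kernelLaw κ₁ y, kernelLaw κ₂ y) ∂ν + (n : ℝ≥0∞)⁻¹ := by
    calc ∫⁻ q : Y × X × Z, c q.2 ∂(ν ⊗ₘ Ks n)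
        = ∫⁻ y, ∫⁻ q, c q ∂Ks n y ∂ν :=
          Measure.lintegral_compProd (hc.measurable.comp measurable_snd)
      _ ≤ ∫⁻ y, (transportCost c (kernelLaw κ₁ y, kernelLaw κ₂ y) + (n : ℝ≥0∞)⁻¹) ∂ν :=
          lintegral_mono (hKs_cost n)
      _ = _ := by simp [lintegral_add_right]
  have hbound_tendsto : Tendsto (fun n : ℕ =>
      ∫⁻ y, transportCost c (kernelLaw κ₁ y, kernelLaw κ₂ y) ∂ν + (n : ℝ≥0∞)⁻¹)
      atTop (𝓝 (∫⁻ y, transportCost c (kernelLaw κ₁ y, kernelLaw κ₂ y) ∂ν)) := by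
    simpa using tendsto_const_nhds.add ENNReal.tendsto_inv_nat_nhds_zero
  calc glueCost c (compProdLaw ν κ₁, compProdLaw ν κ₂)
      ≤ liminf (fun n => glueCost c (pairMarginals (compProdLaw ν (Ks n)))) atTop :=
        ((lowerSemicontinuous_glueCost hc).le_liminf _).trans
          (liminf_le_liminf_of_le hglue_tendsto)
    _ ≤ liminf (fun n : ℕ =>
          ∫⁻ y, transportCost c (kernelLaw κ₁ y, kernelLaw κ₂ y) ∂ν + (n : ℝ≥0∞)⁻¹) atTop :=
        liminf_le_liminf (.of_forall fun n => (glueCost_pairMarginals_le _).trans (hcost_le n))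
    _ = _ := hbound_tendsto.liminf_eq

lemma glueCost_compProdLaw (hc : Continuous c) :
    glueCost c (compProdLaw ν κ₁, compProdLaw ν κ₂) =
      ∫⁻ y, transportCost c (kernelLaw κ₁ y, kernelLaw κ₂ y) ∂ν := by
  refine le_antisymm (glueCost_compProdLaw_le ν κ₁ κ₂ hc) (le_iInf₂ fun ρ hρ => ?_)
  exact lintegral_transportCost_le hc.measurable hρ

end TransportCost

section QuadraticCost

variable {E : Type*} [NormedAddCommGroup E]

/-- The quadratic cost, valued in `ℝ≥0∞` so that its integral is not subject to junk values. -/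
def quadCost (q : E × E) : ℝ≥0∞ :=
  ‖q.1 - q.2‖ₑ ^ 2

lemma continuous_quadCost : Continuous (quadCost (E := E)) := by
  unfold quadCost
  fun_prop

variable {A : Type*} [MeasurableSpace A] {m : Measure A} {f g : A → E}

lemma integral_norm_sq_eq_toReal (hf : AEStronglyMeasurable f m) :
    ∫ a, ‖f a‖ ^ 2 ∂m = (∫⁻ a, ‖f a‖ₑ ^ 2 ∂m).toReal := by
  rw [integral_eq_lintegral_of_nonneg_ae (.of_forall fun _ => sq_nonneg _)
    (hf.norm.aemeasurable.pow_const 2).aestronglyMeasurable]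
  simp only [ENNReal.ofReal_pow (norm_nonneg _), ofReal_norm]

lemma lintegral_enorm_sq_ne_top (hf : MemLp f 2 m) : ∫⁻ a, ‖f a‖ₑ ^ 2 ∂m ≠ ∞ := by
  simpa only [HasFiniteIntegral, enorm_pow, enorm_norm] using
    ((memLp_two_iff_integrable_sq_norm hf.1).1 hf).2.ne

lemma lintegral_quadCost_ne_top (hf : MemLp f 2 m) (hg : MemLp g 2 m) :
    ∫⁻ a, quadCost (f a, g a) ∂m ≠ ∞ :=
  lintegral_enorm_sq_ne_top (hf.sub hg)

variable [MeasurableSpace E] [BorelSpace E] [SecondCountableTopology E]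

lemma memLp_two_of_map_mem_P2 (hf : Measurable f) (h : m.map f ∈ P2) : MemLp f 2 m :=
  MemLp.comp_of_map (g := id) ((memLp_two_iff_integrable_sq_norm (by fun_prop)).2 h.2)
    hf.aemeasurable

lemma tCost_eq_toReal (π : Measure (E × E)) : tCost π = (∫⁻ q, quadCost q ∂π).toReal :=
  integral_norm_sq_eq_toReal (measurable_fst.sub measurable_snd).aestronglyMeasurable

lemma pivotCost_eq_toReal (ρ : Measure (E × E × E)) :
    pivotCost ρ = (∫⁻ p : E × E × E, quadCost p.2 ∂ρ).toReal :=
  integral_norm_sq_eq_toReal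
    (measurable_snd.fst.sub measurable_snd.snd).aestronglyMeasurable

lemma ae_kernel_mem_P2 {ν : Measure E} [IsProbabilityMeasure ν] {κ : Kernel E E}
    [IsMarkovKernel κ] (h : (ν ⊗ₘ κ).snd ∈ P2) : ∀ᵐ y ∂ν, κ y ∈ P2 := by
  have hsq : Integrable (fun p => ‖p.2‖ ^ 2) (ν ⊗ₘ κ) :=
    (memLp_two_iff_integrable_sq_norm (by fun_prop)).1 (memLp_two_of_map_mem_P2 measurable_snd h)
  filter_upwards [((Measure.integrable_compProd_iff hsq.1).1 hsq).1] with y hy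
  exact ⟨inferInstance, hy⟩

end QuadraticCost

section OptimalPlans

lemma coupling_eq_image {X Z : Type*} [MeasurableSpace X] [MeasurableSpace Z]
    (μ : ProbabilityMeasure X) (μ' : ProbabilityMeasure Z) :
    Coupling (μ : Measure X) (μ' : Measure Z) =
      ProbabilityMeasure.toMeasure '' (marginals ⁻¹' {(μ, μ')}) := by
  ext π
  constructor
  · rintro ⟨hπ, hfst, hsnd⟩
    exact ⟨⟨π, hπ⟩, Prod.ext (Subtype.ext hfst) (Subtype.ext hsnd), rfl⟩
  · rintro ⟨π, hπ, rfl⟩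
    exact ⟨π.2, congrArg (fun p => (p.1 : Measure X)) hπ, congrArg (fun p => (p.2 : Measure Z)) hπ⟩

variable {E : Type*} [NormedAddCommGroup E] [MeasurableSpace E]

lemma snd_mem_P2_of_mem_optPlan {μ μ' : Measure E} {γ : Measure (E × E)} (hμ' : μ' ∈ P2)
    (hγ : γ ∈ OptPlan μ μ') : γ.snd ∈ P2 := by
  rwa [Measure.snd, hγ.1.2.2]

lemma coe_mem_gamma_iff {ν μ₁ μ₂ : Measure E} {ρ : ProbabilityMeasure (E × E × E)} :
    (ρ : Measure (E × E × E)) ∈ Gamma ν μ₁ μ₂ ↔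
      ((pairMarginals ρ).1 : Measure (E × E)) ∈ OptPlan ν μ₁ ∧
        ((pairMarginals ρ).2 : Measure (E × E)) ∈ OptPlan ν μ₂ :=
  ⟨fun h => h.2, fun h => ⟨ρ.2, h⟩⟩

variable [BorelSpace E] [SecondCountableTopology E] {μ μ' : ProbabilityMeasure E}

lemma lintegral_quadCost_ne_top_of_marginals (hμ : (μ : Measure E) ∈ P2)
    (hμ' : (μ' : Measure E) ∈ P2) {π : ProbabilityMeasure (E × E)} (hπ : marginals π = (μ, μ')) :
    ∫⁻ q, quadCost q ∂(π : Measure (E × E)) ≠ ∞ := by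
  obtain ⟨rfl, rfl⟩ := Prod.ext_iff.1 hπ
  exact lintegral_quadCost_ne_top (memLp_two_of_map_mem_P2 measurable_fst hμ)
    (memLp_two_of_map_mem_P2 measurable_snd hμ')

lemma lintegral_quadCost_ne_top_of_pairMarginals {ρ : ProbabilityMeasure (E × E × E)}
    (h₁ : ((pairMarginals ρ).1 : Measure (E × E)).snd ∈ P2)
    (h₂ : ((pairMarginals ρ).2 : Measure (E × E)).snd ∈ P2) :
    ∫⁻ p : E × E × E, quadCost p.2 ∂(ρ : Measure (E × E × E)) ≠ ∞ :=
  lintegral_quadCost_ne_top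
    ((memLp_two_of_map_mem_P2 measurable_snd h₁).comp_of_map
      (measurable_id.prodMap measurable_fst).aemeasurable)
    ((memLp_two_of_map_mem_P2 measurable_snd h₂).comp_of_map
      (measurable_id.prodMap measurable_snd).aemeasurable)

variable [CompleteSpace E]

lemma transportCost_quadCost_ne_top (hμ : (μ : Measure E) ∈ P2) (hμ' : (μ' : Measure E) ∈ P2) :
    transportCost quadCost (μ, μ') ≠ ∞ := by
  obtain ⟨π, hπ, hπ_cost⟩ := exists_lintegral_eq_transportCost continuous_quadCost (μ, μ')
  exact hπ_cost ▸ lintegral_quadCost_ne_top_of_marginals hμ hμ' hπ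

lemma W2sq_eq_toReal (hμ : (μ : Measure E) ∈ P2) (hμ' : (μ' : Measure E) ∈ P2) :
    W2sq (μ : Measure E) (μ' : Measure E) = (transportCost quadCost (μ, μ')).toReal := by
  simp only [W2sq, coupling_eq_image, Set.image_image, tCost_eq_toReal, ← marginals_prod μ μ']
  refine (isLeast_toReal_fiberInf isProperMap_marginals
    (lowerSemicontinuous_lintegral_probabilityMeasure continuous_quadCost)
    _ fun π hπ => ?_).csInf_eq
  exact lintegral_quadCost_ne_top_of_marginals hμ hμ' (hπ.trans (marginals_prod μ μ'))

lemma coe_mem_optPlan_iff (hμ : (μ : Measure E) ∈ P2) (hμ' : (μ' : Measure E) ∈ P2)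
    {π : ProbabilityMeasure (E × E)} :
    (π : Measure (E × E)) ∈ OptPlan (μ : Measure E) (μ' : Measure E) ↔ marginals π = (μ, μ') ∧
      ∫⁻ q, quadCost q ∂(π : Measure (E × E)) = transportCost quadCost (μ, μ') := by
  rw [OptPlan, Set.mem_ofPred_eq, coupling_eq_image,
    ProbabilityMeasure.toMeasure_injective.mem_set_image]
  refine and_congr_right fun hπ => ?_
  rw [tCost_eq_toReal, W2sq_eq_toReal hμ hμ', ENNReal.toReal_eq_toReal_iff'
    (lintegral_quadCost_ne_top_of_marginals hμ hμ' hπ) (transportCost_quadCost_ne_top hμ hμ')]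

variable {ν ν' : Measure E}

lemma isCompact_coe_preimage_optPlan (hν : ν ∈ P2) (hν' : ν' ∈ P2) :
    IsCompact (ProbabilityMeasure.toMeasure ⁻¹' OptPlan ν ν') := by
  convert isCompact_setOf_eq_fiberInf isProperMap_marginals
    (lowerSemicontinuous_lintegral_probabilityMeasure continuous_quadCost)
    (⟨ν, hν.1⟩, ⟨ν', hν'.1⟩) using 1
  ext π
  exact coe_mem_optPlan_iff (μ := ⟨ν, hν.1⟩) (μ' := ⟨ν', hν'.1⟩) hν hν'

lemma exists_kernel_compProd_mem_optPlan (hν : ν ∈ P2) (hν' : ν' ∈ P2) :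
    ∃ κ : Kernel E E, ∃ _ : IsMarkovKernel κ, ν ⊗ₘ κ ∈ OptPlan ν ν' := by
  have : IsProbabilityMeasure ν := hν.1
  obtain ⟨π, hπ⟩ :=
    exists_lintegral_eq_transportCost continuous_quadCost (⟨ν, hν.1⟩, ⟨ν', hν'.1⟩)
  have hπ_opt := (coe_mem_optPlan_iff hν hν').2 hπ
  obtain ⟨κ, _, rfl⟩ := exists_compProdLaw_eq (ν := ν) hπ_opt.1.2.1
  exact ⟨κ, inferInstance, hπ_opt⟩

end OptimalPlans

section PivotCost

variable {E : Type*} [NormedAddCommGroup E] [MeasurableSpace E] [BorelSpace E]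
  [SecondCountableTopology E] [CompleteSpace E]

variable {ν μ₁ μ₂ : Measure E}

lemma isCompact_coe_preimage_gamma (hν : ν ∈ P2) (h₁ : μ₁ ∈ P2) (h₂ : μ₂ ∈ P2) :
    IsCompact (ProbabilityMeasure.toMeasure ⁻¹' Gamma ν μ₁ μ₂) := by
  convert isProperMap_pairMarginals.isCompact_preimage
    ((isCompact_coe_preimage_optPlan hν h₁).prod (isCompact_coe_preimage_optPlan hν h₂)) using 1
  ext ρ
  exact coe_mem_gamma_iff

lemma nonempty_coe_preimage_gamma (hν : ν ∈ P2) (h₁ : μ₁ ∈ P2) (h₂ : μ₂ ∈ P2) :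
    (ProbabilityMeasure.toMeasure ⁻¹' Gamma ν μ₁ μ₂).Nonempty := by
  have : IsProbabilityMeasure ν := hν.1
  obtain ⟨κ₁, _, hκ₁⟩ := exists_kernel_compProd_mem_optPlan hν h₁
  obtain ⟨κ₂, _, hκ₂⟩ := exists_kernel_compProd_mem_optPlan hν h₂
  refine ⟨compProdLaw ν (κ₁ ×ₖ κ₂), ?_⟩
  rw [Set.mem_preimage, coe_mem_gamma_iff, pairMarginals_compProdLaw_prod]
  exact ⟨hκ₁, hκ₂⟩

lemma isLeast_Wnusq (hν : ν ∈ P2) (h₁ : μ₁ ∈ P2) (h₂ : μ₂ ∈ P2) :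
    IsLeast (pivotCost '' Gamma ν μ₁ μ₂) (Wnusq ν μ₁ μ₂) := by
  have hlsc := lowerSemicontinuous_lintegral_probabilityMeasure
    (continuous_quadCost.comp (continuous_snd (X := E) (Y := E × E)))
  obtain ⟨ρ, hρ, hmin⟩ := (hlsc.lowerSemicontinuousOn _).exists_isMinOn
    (nonempty_coe_preimage_gamma hν h₁ h₂) (isCompact_coe_preimage_gamma hν h₁ h₂)
  have hleast : IsLeast (pivotCost '' Gamma ν μ₁ μ₂) (pivotCost (ρ : Measure (E × E × E))) := by
    refine ⟨⟨ρ, hρ, rfl⟩, ?_⟩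
    rintro _ ⟨ρ', hρ', rfl⟩
    rw [pivotCost_eq_toReal, pivotCost_eq_toReal]
    refine ENNReal.toReal_mono ?_ (hmin (a := ⟨ρ', hρ'.1⟩) hρ')
    exact lintegral_quadCost_ne_top_of_pairMarginals (ρ := ⟨ρ', hρ'.1⟩)
      (snd_mem_P2_of_mem_optPlan h₁ hρ'.2.1) (snd_mem_P2_of_mem_optPlan h₂ hρ'.2.2)
  rwa [Wnusq, hleast.csInf_eq]

variable [IsProbabilityMeasure ν] {κ₁ κ₂ : Kernel E E} [IsMarkovKernel κ₁]
  [IsMarkovKernel κ₂]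

lemma lintegral_transportCost_quadCost_ne_top (h₁ : (ν ⊗ₘ κ₁).snd ∈ P2)
    (h₂ : (ν ⊗ₘ κ₂).snd ∈ P2) :
    ∫⁻ y, transportCost quadCost (kernelLaw κ₁ y, kernelLaw κ₂ y) ∂ν ≠ ∞ := by
  have hprod := pairMarginals_compProdLaw_prod (ν := ν) (κ₁ := κ₁) (κ₂ := κ₂)
  refine ne_top_of_le_ne_top (lintegral_quadCost_ne_top_of_pairMarginals ?_ ?_)
    (lintegral_transportCost_le continuous_quadCost.measurable hprod)
  · rwa [hprod]
  · rwa [hprod]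

lemma integral_W2sq_eq_toReal_lintegral_transportCost (h₁ : (ν ⊗ₘ κ₁).snd ∈ P2)
    (h₂ : (ν ⊗ₘ κ₂).snd ∈ P2) :
    ∫ y, W2sq (κ₁ y) (κ₂ y) ∂ν =
      (∫⁻ y, transportCost quadCost (kernelLaw κ₁ y, kernelLaw κ₂ y) ∂ν).toReal := by
  have hmeas : Measurable fun y => transportCost quadCost (kernelLaw κ₁ y, kernelLaw κ₂ y) :=
    (measurable_transportCost continuous_quadCost).comp
      ((measurable_kernelLaw κ₁).prodMk (measurable_kernelLaw κ₂))
  rw [← integral_toReal hmeas.aemeasurable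
    (ae_lt_top hmeas (lintegral_transportCost_quadCost_ne_top h₁ h₂))]
  refine integral_congr_ae ?_
  filter_upwards [ae_kernel_mem_P2 h₁, ae_kernel_mem_P2 h₂] with y hy₁ hy₂
  exact W2sq_eq_toReal (μ := kernelLaw κ₁ y) (μ' := kernelLaw κ₂ y) hy₁ hy₂

lemma isLeast_integral_W2sq (h₁ : (ν ⊗ₘ κ₁).snd ∈ P2) (h₂ : (ν ⊗ₘ κ₂).snd ∈ P2) :
    IsLeast ((fun ρ : ProbabilityMeasure (E × E × E) => pivotCost (ρ : Measure (E × E × E))) ''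
      (pairMarginals ⁻¹' {(compProdLaw ν κ₁, compProdLaw ν κ₂)}))
      (∫ y, W2sq (κ₁ y) (κ₂ y) ∂ν) := by
  simp only [pivotCost_eq_toReal]
  rw [integral_W2sq_eq_toReal_lintegral_transportCost h₁ h₂,
    ← glueCost_compProdLaw ν κ₁ κ₂ continuous_quadCost, ← pairMarginals_compProdLaw_prod]
  refine isLeast_toReal_fiberInf isProperMap_pairMarginals
    (lowerSemicontinuous_lintegral_probabilityMeasure (continuous_quadCost.comp continuous_snd))
    _ fun ρ hρ => ?_
  rw [pairMarginals_compProdLaw_prod] at hρ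
  exact lintegral_quadCost_ne_top_of_pairMarginals (by rwa [hρ]) (by rwa [hρ])

lemma Wnusq_le_integral_W2sq (hν : ν ∈ P2) (h₁ : μ₁ ∈ P2) (h₂ : μ₂ ∈ P2)
    (hκ₁ : ν ⊗ₘ κ₁ ∈ OptPlan ν μ₁) (hκ₂ : ν ⊗ₘ κ₂ ∈ OptPlan ν μ₂) :
    Wnusq ν μ₁ μ₂ ≤ ∫ y, W2sq (κ₁ y) (κ₂ y) ∂ν := by
  obtain ⟨ρ, hρ, hρ_cost⟩ := (isLeast_integral_W2sq
    (snd_mem_P2_of_mem_optPlan h₁ hκ₁) (snd_mem_P2_of_mem_optPlan h₂ hκ₂)).1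
  rw [← hρ_cost]
  refine (isLeast_Wnusq hν h₁ h₂).2 ⟨ρ, coe_mem_gamma_iff.2 ?_, rfl⟩
  rw [show pairMarginals ρ = _ from hρ]
  exact ⟨hκ₁, hκ₂⟩

lemma exists_Wnusq_eq_integral_W2sq (hν : ν ∈ P2) (h₁ : μ₁ ∈ P2) (h₂ : μ₂ ∈ P2) :
    ∃ κ₁ κ₂ : Kernel E E, IsMarkovKernel κ₁ ∧ IsMarkovKernel κ₂ ∧
      ν ⊗ₘ κ₁ ∈ OptPlan ν μ₁ ∧ ν ⊗ₘ κ₂ ∈ OptPlan ν μ₂ ∧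
      Wnusq ν μ₁ μ₂ = ∫ y, W2sq (κ₁ y) (κ₂ y) ∂ν := by
  obtain ⟨ρ, hρ, hρ_cost⟩ := (isLeast_Wnusq hν h₁ h₂).1
  obtain ⟨ρ, rfl⟩ : ∃ ρ' : ProbabilityMeasure (E × E × E), ↑ρ' = ρ := ⟨⟨ρ, hρ.1⟩, rfl⟩
  rw [coe_mem_gamma_iff] at hρ
  obtain ⟨κ₁, _, hκ₁⟩ := exists_compProdLaw_eq hρ.1.1.2.1
  obtain ⟨κ₂, _, hκ₂⟩ := exists_compProdLaw_eq hρ.2.1.2.1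
  rw [← hκ₁, ← hκ₂] at hρ
  refine ⟨κ₁, κ₂, inferInstance, inferInstance, hρ.1, hρ.2,
    (Wnusq_le_integral_W2sq hν h₁ h₂ hρ.1 hρ.2).antisymm ?_⟩
  rw [← hρ_cost]
  exact (isLeast_integral_W2sq
    (snd_mem_P2_of_mem_optPlan h₁ hρ.1) (snd_mem_P2_of_mem_optPlan h₂ hρ.2)).2
      ⟨ρ, Prod.ext hκ₁.symm hκ₂.symm, rfl⟩

end PivotCost

lemma bind_map_prodMk_eq_compProd {X Y : Type*} [MeasurableSpace X] [MeasurableSpace Y]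
    (ν : Measure Y) [SFinite ν] (κ : Kernel Y X) [IsSFiniteKernel κ] :
    ν.bind (fun y => (κ y).map fun x => (y, x)) = ν ⊗ₘ κ := by
  rw [Measure.compProd_eq_comp_prod]
  congr with y : 1
  rw [Kernel.prod_apply, Kernel.id_apply, Measure.dirac_prod]

theorem Wnusq_disintegration_general {E : Type*} [NormedAddCommGroup E] [CompleteSpace E]
    [SecondCountableTopology E] [MeasurableSpace E] [BorelSpace E] {ν μ₁ μ₂ : Measure E}
    (hν : ν ∈ P2) (h₁ : μ₁ ∈ P2) (h₂ : μ₂ ∈ P2) :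
    (∃ γ₁ ∈ OptPlan ν μ₁, ∃ γ₂ ∈ OptPlan ν μ₂, ∃ κ₁ κ₂ : Kernel E E,
      IsMarkovKernel κ₁ ∧ IsMarkovKernel κ₂ ∧
      ν.bind (fun y => (κ₁ y).map (fun x => (y, x))) = γ₁ ∧
      ν.bind (fun y => (κ₂ y).map (fun x => (y, x))) = γ₂ ∧
      Wnusq ν μ₁ μ₂ = ∫ y, W2sq (κ₁ y) (κ₂ y) ∂ν) ∧
    (∀ γ₁ ∈ OptPlan ν μ₁, ∀ γ₂ ∈ OptPlan ν μ₂, ∀ κ₁ κ₂ : Kernel E E,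
      IsMarkovKernel κ₁ → IsMarkovKernel κ₂ →
      ν.bind (fun y => (κ₁ y).map (fun x => (y, x))) = γ₁ →
      ν.bind (fun y => (κ₂ y).map (fun x => (y, x))) = γ₂ →
      Wnusq ν μ₁ μ₂ ≤ ∫ y, W2sq (κ₁ y) (κ₂ y) ∂ν) := by
  have : IsProbabilityMeasure ν := hν.1
  constructor
  · obtain ⟨κ₁, κ₂, _, _, hκ₁, hκ₂, hW⟩ := exists_Wnusq_eq_integral_W2sq hν h₁ h₂
    exact ⟨_, hκ₁, _, hκ₂, κ₁, κ₂, inferInstance, inferInstance,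
      bind_map_prodMk_eq_compProd ν κ₁, bind_map_prodMk_eq_compProd ν κ₂, hW⟩
  · rintro γ₁ hγ₁ γ₂ hγ₂ κ₁ κ₂ _ _ rfl rfl
    rw [bind_map_prodMk_eq_compProd] at hγ₁ hγ₂
    exact Wnusq_le_integral_W2sq hν h₁ h₂ hγ₁ hγ₂

/-- disintegration formula for the ν-based Wasserstein discrepancy:
`W_ν²(μ1, μ2)` equals the minimum over optimal plans `γ1 ∈ Π*(ν, μ1)`, `γ2 ∈ Π*(ν, μ2)` of
`∫ W₂²(γ1^y, γ2^y) dν(y)`, where `γ_i^y` are disintegration kernels of `γ_i` with respect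
to `ν`, and this minimum is attained. -/
theorem Wnusq_disintegration {d : ℕ} (ν μ1 μ2 : Measure (Euc d))
    (hν : ν ∈ (P2 : Set (Measure (Euc d)))) (h1 : μ1 ∈ (P2 : Set (Measure (Euc d))))
    (h2 : μ2 ∈ (P2 : Set (Measure (Euc d)))) :
    (∃ γ1 ∈ OptPlan ν μ1, ∃ γ2 ∈ OptPlan ν μ2,
      ∃ κ1 κ2 : Kernel (Euc d) (Euc d),
        IsMarkovKernel κ1 ∧ IsMarkovKernel κ2 ∧
        ν.bind (fun y => (κ1 y).map (fun x => (y, x))) = γ1 ∧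
        ν.bind (fun y => (κ2 y).map (fun x => (y, x))) = γ2 ∧
        Wnusq ν μ1 μ2 = ∫ y, W2sq (κ1 y) (κ2 y) ∂ν) ∧
    (∀ γ1 ∈ OptPlan ν μ1, ∀ γ2 ∈ OptPlan ν μ2,
      ∀ κ1 κ2 : Kernel (Euc d) (Euc d),
        IsMarkovKernel κ1 → IsMarkovKernel κ2 →
        ν.bind (fun y => (κ1 y).map (fun x => (y, x))) = γ1 →
        ν.bind (fun y => (κ2 y).map (fun x => (y, x))) = γ2 →
        Wnusq ν μ1 μ2 ≤ ∫ y, W2sq (κ1 y) (κ2 y) ∂ν) :=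
  Wnusq_disintegration_general hν h1 h2

end
end

section
/- For μ1, μ2 ∈ P_2(ℝ^d), the set of Wasserstein means M(μ1, μ2) := argmin_{μ ∈ P_2(ℝ^d)} (W_2²(μ1, μ) + W_2²(μ, μ2)) equals the set of middles of Wasserstein geodesics: M(μ1, μ2) = { ((1/2)P_1 + (1/2)P_2)#γ : γ ∈ Π*(μ1, μ2) }, where P_1(x,y) = x and P_2(x,y) = y are the coordinate projections on ℝ^d × ℝ^d. -/
open MeasureTheory Filter Topology ProbabilityTheory
open scoped ENNReal RealInnerProductSpace Classical

noncomputable section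

/-! Apollonius' identity `‖x - y‖² + ‖y - z‖² = ½‖x - z‖² + 2‖y - (x + z)/2‖²`, integrated
against a gluing of optimal plans for `(μ₁, μ)` and `(μ, μ₂)`, gives a coupling `γ` of `μ₁, μ₂` with
`½ ∫ ‖x - z‖² dγ + 2 W₂²(μ, m) ≤ W₂²(μ₁, μ) + W₂²(μ, μ₂)`, where `m` is the middle of `γ`. So the
objective is at least `½ W₂²(μ₁, μ₂)`, a value attained at the middles of optimal plans; and if it
is attained at `μ`, then `γ` is optimal and `W₂(μ, m) = 0`. -/

open scoped NNReal

section Couplings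

lemma prod_mem_Coupling {X Y : Type*} [MeasurableSpace X] [MeasurableSpace Y]
    (μ : Measure X) (ν : Measure Y) [IsProbabilityMeasure μ] [IsProbabilityMeasure ν] :
    μ.prod ν ∈ Coupling μ ν :=
  ⟨inferInstance, by simp, by simp⟩

lemma map_prodMk_mem_Coupling {Ω X Y : Type*} [MeasurableSpace Ω] [MeasurableSpace X]
    [MeasurableSpace Y] {P : Measure Ω} [IsProbabilityMeasure P] {f : Ω → X} {g : Ω → Y}
    (hf : Measurable f) (hg : Measurable g) :
    P.map (fun ω => (f ω, g ω)) ∈ Coupling (P.map f) (P.map g) :=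
  ⟨Measure.isProbabilityMeasure_map (by fun_prop), Measure.fst_map_prodMk hg,
    Measure.snd_map_prodMk hf⟩

lemma exists_glue {X Y Z : Type*} [MeasurableSpace X] [MeasurableSpace Y] [MeasurableSpace Z]
    [StandardBorelSpace Z] {μ : Measure X} {ν : Measure Y} {ξ : Measure Z}
    {π₁ : Measure (X × Y)} {π₂ : Measure (Y × Z)}
    (h₁ : π₁ ∈ Coupling μ ν) (h₂ : π₂ ∈ Coupling ν ξ) :
    ∃ ρ : Measure ((X × Y) × Z), IsProbabilityMeasure ρ ∧
      ρ.map (fun p => p.1) = π₁ ∧ ρ.map (fun p => (p.1.2, p.2)) = π₂ := by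
  have := h₁.1
  have := h₂.1
  have := π₂.nonempty_of_neZero.map Prod.snd
  -- Given `(x, y)` drawn from `π₁`, draw `z` from the disintegration of `π₂` at `y`.
  refine ⟨π₁ ⊗ₘ π₂.condKernel.prodMkLeft X, inferInstance, Measure.fst_compProd _ _, ?_⟩
  have disintegration : π₁.map Prod.snd ⊗ₘ π₂.condKernel = π₂ := by
    rw [h₁.2.2, ← h₂.2.1]
    exact π₂.disintegrate _
  refine Eq.trans ?_ disintegration
  ext s hs
  rw [Measure.map_apply (by fun_prop) hs, Measure.compProd_apply (by measurability),
    Measure.compProd_apply hs,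
    lintegral_map (Kernel.measurable_kernel_prodMk_left hs) (by fun_prop)]
  rfl

end Couplings

section OptimalCoupling

lemma lowerSemicontinuous_lintegral_probabilityMeasure_s5 {X : Type*} [TopologicalSpace X]
    [MeasurableSpace X] [OpensMeasurableSpace X] {c : X → ℝ≥0} (hc : Continuous c) :
    LowerSemicontinuous fun P : ProbabilityMeasure X => ∫⁻ x, c x ∂(P : Measure X) := by
  let truncation (n : ℕ) : BoundedContinuousFunction X ℝ≥0 :=
    .mkOfBound ⟨fun x => min (c x) n, by fun_prop⟩ n fun x y => by
      simpa [NNReal.dist_eq, Real.dist_eq] using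
        Real.dist_le_of_mem_Icc (x := (min (c x) n : ℝ≥0)) (y := (min (c y) n : ℝ≥0))
          (x' := 0) (y' := n) (by simp) (by simp)
  have iSup_truncation (x : X) : ⨆ n, (truncation n x : ℝ≥0∞) = c x := by
    change ⨆ n : ℕ, ((min (c x) n : ℝ≥0) : ℝ≥0∞) = c x
    simp only [ENNReal.coe_min, ENNReal.coe_natCast, ← inf_iSup_eq, ENNReal.iSup_natCast,
      inf_top_eq]
  have lintegral_eq (P : ProbabilityMeasure X) :
      ∫⁻ x, c x ∂(P : Measure X) = ⨆ n, ∫⁻ x, truncation n x ∂(P : Measure X) := by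
    simp only [← iSup_truncation]
    refine lintegral_iSup (fun n => (truncation n).continuous.measurable.coe_nnreal_ennreal) ?_
    intro m n hmn x
    exact ENNReal.coe_le_coe.2 (min_le_min le_rfl (Nat.cast_le.2 hmn))
  simp only [lintegral_eq]
  refine lowerSemicontinuous_iSup fun n => Continuous.lowerSemicontinuous ?_
  exact ProbabilityMeasure.continuous_lintegral_boundedContinuousFunction (truncation n)

variable {X Y : Type*} [TopologicalSpace X] [PolishSpace X] [MeasurableSpace X] [BorelSpace X]
  [TopologicalSpace Y] [PolishSpace Y] [MeasurableSpace Y] [BorelSpace Y]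

lemma isClosed_Coupling (μ : Measure X) (ν : Measure Y) [IsProbabilityMeasure μ]
    [IsProbabilityMeasure ν] :
    IsClosed {P : ProbabilityMeasure (X × Y) | (P : Measure (X × Y)) ∈ Coupling μ ν} := by
  let μ' : ProbabilityMeasure X := ⟨μ, inferInstance⟩
  let ν' : ProbabilityMeasure Y := ⟨ν, inferInstance⟩
  have closed_fst := (isClosed_singleton (x := μ')).preimage
    (ProbabilityMeasure.continuous_map (continuous_fst (X := X) (Y := Y)))
  have closed_snd := (isClosed_singleton (x := ν')).preimage
    (ProbabilityMeasure.continuous_map (continuous_snd (X := X) (Y := Y)))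
  convert closed_fst.inter closed_snd using 1
  ext P
  exact ⟨fun h => ⟨Subtype.ext h.2.1, Subtype.ext h.2.2⟩,
    fun h => ⟨inferInstance, congrArg Subtype.val h.1, congrArg Subtype.val h.2⟩⟩

lemma isCompact_Coupling (μ : Measure X) (ν : Measure Y) [IsProbabilityMeasure μ]
    [IsProbabilityMeasure ν] :
    IsCompact {P : ProbabilityMeasure (X × Y) | (P : Measure (X × Y)) ∈ Coupling μ ν} := by
  rw [← (isClosed_Coupling μ ν).closure_eq]
  refine isCompact_closure_of_isTightMeasureSet (.prodMk ?_ ?_)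
  · refine (isTightMeasureSet_singleton (μ := μ)).subset ?_
    rintro _ ⟨_, ⟨P, hP, rfl⟩, rfl⟩
    exact hP.2.1
  · refine (isTightMeasureSet_singleton (μ := ν)).subset ?_
    rintro _ ⟨_, ⟨P, hP, rfl⟩, rfl⟩
    exact hP.2.2

lemma exists_isMinOn_lintegral_Coupling (μ : Measure X) (ν : Measure Y) [IsProbabilityMeasure μ]
    [IsProbabilityMeasure ν] {c : X × Y → ℝ≥0} (hc : Continuous c) :
    ∃ π ∈ Coupling μ ν, IsMinOn (fun π => ∫⁻ p, c p ∂π) (Coupling μ ν) π := by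
  obtain ⟨P, hP, hmin⟩ := LowerSemicontinuousOn.exists_isMinOn
    ⟨⟨μ.prod ν, inferInstance⟩, prod_mem_Coupling μ ν⟩ (isCompact_Coupling μ ν)
    ((lowerSemicontinuous_lintegral_probabilityMeasure_s5 hc).lowerSemicontinuousOn _)
  exact ⟨P, hP, fun π hπ => hmin (a := ⟨π, hπ.1⟩) hπ⟩

end OptimalCoupling

section Wasserstein

variable {E : Type*} [NormedAddCommGroup E] [MeasurableSpace E]

lemma tCost_nonneg (π : Measure (E × E)) : 0 ≤ tCost π :=
  integral_nonneg fun _ => sq_nonneg _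

lemma W2sq_le_tCost {μ ν : Measure E} {π : Measure (E × E)} (hπ : π ∈ Coupling μ ν) :
    W2sq μ ν ≤ tCost π :=
  csInf_le ⟨0, Set.forall_mem_image.2 fun π _ => tCost_nonneg π⟩ (Set.mem_image_of_mem _ hπ)

lemma W2sq_nonneg (μ ν : Measure E) : 0 ≤ W2sq μ ν :=
  Real.sInf_nonneg (Set.forall_mem_image.2 fun π _ => tCost_nonneg π)

variable [BorelSpace E] [SecondCountableTopology E]

lemma map_mem_P2_iff {Ω : Type*} [MeasurableSpace Ω] {P : Measure Ω} [IsProbabilityMeasure P]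
    {f : Ω → E} (hf : Measurable f) : P.map f ∈ P2 ↔ MemLp f 2 P := by
  rw [memLp_two_iff_integrable_sq_norm hf.aestronglyMeasurable]
  exact (and_iff_right (Measure.isProbabilityMeasure_map hf.aemeasurable)).trans
    (integrable_map_measure (by fun_prop) hf.aemeasurable)

lemma tCost_map_prodMk {Ω : Type*} [MeasurableSpace Ω] {P : Measure Ω} {f g : Ω → E}
    (hf : Measurable f) (hg : Measurable g) :
    tCost (P.map fun ω => (f ω, g ω)) = ∫ ω, ‖f ω - g ω‖ ^ 2 ∂P :=
  integral_map (by fun_prop) (by fun_prop)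

lemma W2sq_map_le_integral {Ω : Type*} [MeasurableSpace Ω] {P : Measure Ω} [IsProbabilityMeasure P]
    {f g : Ω → E} (hf : Measurable f) (hg : Measurable g) :
    W2sq (P.map f) (P.map g) ≤ ∫ ω, ‖f ω - g ω‖ ^ 2 ∂P :=
  (W2sq_le_tCost (map_prodMk_mem_Coupling hf hg)).trans_eq (tCost_map_prodMk hf hg)

lemma memLp_fst_of_mem_Coupling {μ ν : Measure E} {π : Measure (E × E)} (hπ : π ∈ Coupling μ ν)
    (hμ : μ ∈ P2) : MemLp (fun p => p.1) 2 π :=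
  have := hπ.1
  (map_mem_P2_iff measurable_fst).1 (hπ.2.1 ▸ hμ)

lemma memLp_snd_of_mem_Coupling {μ ν : Measure E} {π : Measure (E × E)} (hπ : π ∈ Coupling μ ν)
    (hν : ν ∈ P2) : MemLp (fun p => p.2) 2 π :=
  have := hπ.1
  (map_mem_P2_iff measurable_snd).1 (hπ.2.2 ▸ hν)

lemma integrable_norm_sub_sq_of_mem_Coupling {μ ν : Measure E} {π : Measure (E × E)}
    (hπ : π ∈ Coupling μ ν) (hμ : μ ∈ P2) (hν : ν ∈ P2) :
    Integrable (fun p => ‖p.1 - p.2‖ ^ 2) π :=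
  ((memLp_fst_of_mem_Coupling hπ hμ).sub (memLp_snd_of_mem_Coupling hπ hν)).integrable_norm_pow
    two_ne_zero

lemma ofReal_tCost_of_mem_Coupling {μ ν : Measure E} {π : Measure (E × E)} (hπ : π ∈ Coupling μ ν)
    (hμ : μ ∈ P2) (hν : ν ∈ P2) :
    ENNReal.ofReal (tCost π) = ∫⁻ p, (‖p.1 - p.2‖₊ ^ 2 : ℝ≥0) ∂π := by
  rw [tCost, ofReal_integral_eq_lintegral_ofReal (integrable_norm_sub_sq_of_mem_Coupling hπ hμ hν)
    (.of_forall fun _ => sq_nonneg _)]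
  simp only [← coe_nnnorm, ← NNReal.coe_pow, ENNReal.ofReal_coe_nnreal]

lemma exists_mem_OptPlan [CompleteSpace E] {μ ν : Measure E} (hμ : μ ∈ P2) (hν : ν ∈ P2) :
    ∃ π, π ∈ OptPlan μ ν := by
  have := hμ.1
  have := hν.1
  obtain ⟨π, hπ, hmin⟩ := exists_isMinOn_lintegral_Coupling μ ν
    (c := fun p => ‖p.1 - p.2‖₊ ^ 2) (by fun_prop)
  refine ⟨π, hπ, (le_csInf ⟨_, Set.mem_image_of_mem _ hπ⟩ ?_).antisymm (W2sq_le_tCost hπ)⟩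
  refine Set.forall_mem_image.2 fun π' hπ' => ?_
  rw [← ENNReal.ofReal_le_ofReal_iff (tCost_nonneg π'), ofReal_tCost_of_mem_Coupling hπ hμ hν,
    ofReal_tCost_of_mem_Coupling hπ' hμ hν]
  exact hmin hπ'

lemma eq_of_W2sq_eq_zero [CompleteSpace E] {μ ν : Measure E} (hμ : μ ∈ P2) (hν : ν ∈ P2)
    (h : W2sq μ ν = 0) : μ = ν := by
  obtain ⟨π, hπ, hcost⟩ := exists_mem_OptPlan hμ hν
  have cost_ae_zero : (fun p => ‖p.1 - p.2‖ ^ 2) =ᵐ[π] 0 :=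
    (integral_eq_zero_iff_of_nonneg (fun _ => sq_nonneg _)
      (integrable_norm_sub_sq_of_mem_Coupling hπ hμ hν)).1 (hcost.trans h)
  rw [← hπ.2.1, ← hπ.2.2]
  refine Measure.map_congr ?_
  filter_upwards [cost_ae_zero] with p hp
  simpa [sub_eq_zero] using hp

end Wasserstein

section Middles

/-- The middle `((1/2)P₁ + (1/2)P₂)#γ` of a plan `γ`: for optimal `γ`, the point at time `1/2` of
the Wasserstein geodesic `t ↦ ((1 - t)P₁ + tP₂)#γ`. -/
def planMiddle {E : Type*} [NormedAddCommGroup E] [NormedSpace ℝ E] [MeasurableSpace E]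
    (γ : Measure (E × E)) : Measure E :=
  γ.map fun p => midpoint ℝ p.1 p.2

section NormedSpace

variable {E : Type*} [NormedAddCommGroup E] [NormedSpace ℝ E]

lemma memLp_midpoint {Ω : Type*} [MeasurableSpace Ω] {P : Measure Ω} {f g : Ω → E} {p : ℝ≥0∞}
    (hf : MemLp f p P) (hg : MemLp g p P) : MemLp (fun ω => midpoint ℝ (f ω) (g ω)) p P := by
  simp only [midpoint_eq_smul_add]
  exact (hf.add hg).const_smul _

variable [MeasurableSpace E]

lemma planMiddle_eq_map_smul_add_smul : (planMiddle : Measure (E × E) → Measure E) =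
    fun γ => γ.map fun p => (1 / 2 : ℝ) • p.1 + (1 / 2 : ℝ) • p.2 := by
  funext γ
  simp only [planMiddle, midpoint_eq_smul_add, invOf_eq_inv, one_div, smul_add]

variable [BorelSpace E] [SecondCountableTopology E]

@[fun_prop]
lemma measurable_midpoint {Ω : Type*} [MeasurableSpace Ω] {f g : Ω → E} (hf : Measurable f)
    (hg : Measurable g) : Measurable fun ω => midpoint ℝ (f ω) (g ω) := by
  simp only [midpoint_eq_smul_add]
  fun_prop

lemma planMiddle_map_prodMk {Ω : Type*} [MeasurableSpace Ω] {P : Measure Ω} {f g : Ω → E}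
    (hf : Measurable f) (hg : Measurable g) :
    planMiddle (P.map fun ω => (f ω, g ω)) = P.map fun ω => midpoint ℝ (f ω) (g ω) :=
  Measure.map_map (measurable_midpoint measurable_fst measurable_snd) (hf.prodMk hg)

lemma planMiddle_mem_P2 {μ₁ μ₂ : Measure E} {γ : Measure (E × E)} (hγ : γ ∈ Coupling μ₁ μ₂)
    (h₁ : μ₁ ∈ P2) (h₂ : μ₂ ∈ P2) : planMiddle γ ∈ P2 := by
  have := hγ.1
  exact (map_mem_P2_iff (by fun_prop)).2
    (memLp_midpoint (memLp_fst_of_mem_Coupling hγ h₁) (memLp_snd_of_mem_Coupling hγ h₂))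

lemma W2sq_left_planMiddle_le {μ₁ μ₂ : Measure E} {γ : Measure (E × E)}
    (hγ : γ ∈ Coupling μ₁ μ₂) : W2sq μ₁ (planMiddle γ) ≤ tCost γ / 4 := by
  have := hγ.1
  calc W2sq μ₁ (planMiddle γ)
      ≤ ∫ p, ‖p.1 - midpoint ℝ p.1 p.2‖ ^ 2 ∂γ := by
        rw [← hγ.2.1]
        exact W2sq_map_le_integral measurable_fst (by fun_prop)
    _ = tCost γ / 4 := by
        rw [tCost, ← integral_div]
        refine integral_congr_ae (.of_forall fun p => ?_)
        simp only [← dist_eq_norm, dist_left_midpoint, Real.norm_two]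
        ring

lemma W2sq_planMiddle_right_le {μ₁ μ₂ : Measure E} {γ : Measure (E × E)}
    (hγ : γ ∈ Coupling μ₁ μ₂) : W2sq (planMiddle γ) μ₂ ≤ tCost γ / 4 := by
  have := hγ.1
  calc W2sq (planMiddle γ) μ₂
      ≤ ∫ p, ‖midpoint ℝ p.1 p.2 - p.2‖ ^ 2 ∂γ := by
        rw [← hγ.2.2]
        exact W2sq_map_le_integral (by fun_prop) measurable_snd
    _ = tCost γ / 4 := by
        rw [tCost, ← integral_div]
        refine integral_congr_ae (.of_forall fun p => ?_)
        simp only [← dist_eq_norm, dist_midpoint_right, Real.norm_two]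
        ring

lemma W2sq_add_W2sq_planMiddle_le {μ₁ μ₂ : Measure E} {γ : Measure (E × E)}
    (hγ : γ ∈ OptPlan μ₁ μ₂) :
    W2sq μ₁ (planMiddle γ) + W2sq (planMiddle γ) μ₂ ≤ W2sq μ₁ μ₂ / 2 := by
  linarith [W2sq_left_planMiddle_le hγ.1, W2sq_planMiddle_right_le hγ.1, hγ.2]

end NormedSpace

variable {E : Type*} [NormedAddCommGroup E] [InnerProductSpace ℝ E]

lemma norm_sub_sq_add_norm_sub_sq_eq_midpoint (x y z : E) :
    ‖x - y‖ ^ 2 + ‖y - z‖ ^ 2 = ‖x - z‖ ^ 2 / 2 + 2 * ‖y - midpoint ℝ x z‖ ^ 2 := by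
  have apollonius :=
    EuclideanGeometry.dist_sq_add_dist_sq_eq_two_mul_dist_midpoint_sq_add_half_dist_sq y x z
  simp only [dist_eq_norm] at apollonius
  rw [norm_sub_rev x y, apollonius]
  ring

lemma integral_norm_sub_sq_add_integral_norm_sub_sq {Ω : Type*} [MeasurableSpace Ω]
    {P : Measure Ω} {f g h : Ω → E} (hf : MemLp f 2 P) (hg : MemLp g 2 P) (hh : MemLp h 2 P) :
    ∫ ω, ‖f ω - g ω‖ ^ 2 ∂P + ∫ ω, ‖g ω - h ω‖ ^ 2 ∂P =
      (∫ ω, ‖f ω - h ω‖ ^ 2 ∂P) / 2 + 2 * ∫ ω, ‖g ω - midpoint ℝ (f ω) (h ω)‖ ^ 2 ∂P := by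
  have integrable_norm_sub_sq {u v : Ω → E} (hu : MemLp u 2 P) (hv : MemLp v 2 P) :
      Integrable (fun ω => ‖u ω - v ω‖ ^ 2) P :=
    (hu.sub hv).integrable_norm_pow two_ne_zero
  rw [← integral_add (integrable_norm_sub_sq hf hg) (integrable_norm_sub_sq hg hh), ← integral_div,
    ← integral_const_mul, ← integral_add ((integrable_norm_sub_sq hf hh).div_const 2)
      ((integrable_norm_sub_sq hg (memLp_midpoint hf hh)).const_mul 2)]
  simp only [norm_sub_sq_add_norm_sub_sq_eq_midpoint]

variable [MeasurableSpace E] [BorelSpace E] [SecondCountableTopology E]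

lemma tCost_add_W2sq_planMiddle_le {Ω : Type*} [MeasurableSpace Ω] {P : Measure Ω}
    [IsProbabilityMeasure P] {x y z : Ω → E} (hx : Measurable x) (hy : Measurable y)
    (hz : Measurable z) (hx₂ : MemLp x 2 P) (hy₂ : MemLp y 2 P) (hz₂ : MemLp z 2 P) :
    tCost (P.map fun ω => (x ω, z ω)) / 2 +
        2 * W2sq (P.map y) (planMiddle (P.map fun ω => (x ω, z ω))) ≤
      tCost (P.map fun ω => (x ω, y ω)) + tCost (P.map fun ω => (y ω, z ω)) := by
  rw [tCost_map_prodMk hx hz, tCost_map_prodMk hx hy, tCost_map_prodMk hy hz,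
    planMiddle_map_prodMk hx hz, integral_norm_sub_sq_add_integral_norm_sub_sq hx₂ hy₂ hz₂]
  gcongr
  exact W2sq_map_le_integral hy (by fun_prop)

variable [CompleteSpace E] {μ₁ μ μ₂ : Measure E}

lemma exists_tCost_add_W2sq_planMiddle_le (h₁ : μ₁ ∈ P2) (h : μ ∈ P2) (h₂ : μ₂ ∈ P2) :
    ∃ γ ∈ Coupling μ₁ μ₂,
      tCost γ / 2 + 2 * W2sq μ (planMiddle γ) ≤ W2sq μ₁ μ + W2sq μ μ₂ := by
  obtain ⟨π₁, hπ₁, cost₁⟩ := exists_mem_OptPlan h₁ h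
  obtain ⟨π₂, hπ₂, cost₂⟩ := exists_mem_OptPlan h h₂
  obtain ⟨ρ, hρ, law_xy, law_yz⟩ := exists_glue hπ₁ hπ₂
  let x : (E × E) × E → E := fun p => p.1.1
  let y : (E × E) × E → E := fun p => p.1.2
  let z : (E × E) × E → E := fun p => p.2
  have hx : Measurable x := by fun_prop
  have hy : Measurable y := by fun_prop
  have hz : Measurable z := by fun_prop
  have law_x : ρ.map x = μ₁ := by
    rw [← hπ₁.2.1, ← law_xy, Measure.map_map (by fun_prop) (by fun_prop)]; rfl
  have law_y : ρ.map y = μ := by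
    rw [← hπ₁.2.2, ← law_xy, Measure.map_map (by fun_prop) (by fun_prop)]; rfl
  have law_z : ρ.map z = μ₂ := by
    rw [← hπ₂.2.2, ← law_yz, Measure.map_map (by fun_prop) (by fun_prop)]; rfl
  refine ⟨ρ.map fun p => (x p, z p), law_x ▸ law_z ▸ map_prodMk_mem_Coupling hx hz, ?_⟩
  rw [← cost₁, ← cost₂, ← law_xy, ← law_yz, ← law_y]
  exact tCost_add_W2sq_planMiddle_le hx hy hz ((map_mem_P2_iff hx).1 (law_x ▸ h₁))
    ((map_mem_P2_iff hy).1 (law_y ▸ h)) ((map_mem_P2_iff hz).1 (law_z ▸ h₂))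

lemma half_W2sq_le_W2sq_add_W2sq (h₁ : μ₁ ∈ P2) (h : μ ∈ P2) (h₂ : μ₂ ∈ P2) :
    W2sq μ₁ μ₂ / 2 ≤ W2sq μ₁ μ + W2sq μ μ₂ := by
  obtain ⟨γ, hγ, hle⟩ := exists_tCost_add_W2sq_planMiddle_le h₁ h h₂
  linarith [W2sq_le_tCost hγ, W2sq_nonneg μ (planMiddle γ)]

lemma exists_OptPlan_planMiddle_eq (h₁ : μ₁ ∈ P2) (h : μ ∈ P2) (h₂ : μ₂ ∈ P2)
    (hle : W2sq μ₁ μ + W2sq μ μ₂ ≤ W2sq μ₁ μ₂ / 2) :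
    ∃ γ ∈ OptPlan μ₁ μ₂, planMiddle γ = μ := by
  obtain ⟨γ, hγ, hγ_le⟩ := exists_tCost_add_W2sq_planMiddle_le h₁ h h₂
  have cost_ge := W2sq_le_tCost hγ
  have dist_nonneg := W2sq_nonneg μ (planMiddle γ)
  have optimal : tCost γ = W2sq μ₁ μ₂ := by linarith
  have dist_eq_zero : W2sq μ (planMiddle γ) = 0 := by linarith
  exact ⟨γ, ⟨hγ, optimal⟩, (eq_of_W2sq_eq_zero h (planMiddle_mem_P2 hγ h₁ h₂) dist_eq_zero).symm⟩

end Middles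

theorem WMean_eq_geodesic_middles_general {E : Type*} [NormedAddCommGroup E]
    [InnerProductSpace ℝ E] [CompleteSpace E] [SecondCountableTopology E] [MeasurableSpace E]
    [BorelSpace E] {μ₁ μ₂ : Measure E} (h₁ : μ₁ ∈ P2) (h₂ : μ₂ ∈ P2) :
    {μ ∈ P2 | IsMinOn (fun μ => W2sq μ₁ μ + W2sq μ μ₂) P2 μ} =
      planMiddle '' OptPlan μ₁ μ₂ := by
  ext μ
  constructor
  · rintro ⟨hμ, hmin⟩
    obtain ⟨γ, hγ⟩ := exists_mem_OptPlan h₁ h₂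
    exact exists_OptPlan_planMiddle_eq h₁ hμ h₂
      ((hmin (planMiddle_mem_P2 hγ.1 h₁ h₂)).trans (W2sq_add_W2sq_planMiddle_le hγ))
  · rintro ⟨γ, hγ, rfl⟩
    exact ⟨planMiddle_mem_P2 hγ.1 h₁ h₂, fun μ' hμ' =>
      (W2sq_add_W2sq_planMiddle_le hγ).trans (half_W2sq_le_W2sq_add_W2sq h₁ hμ' h₂)⟩

/-- the Wasserstein means of `μ1, μ2` are exactly the middles
`((1/2)P₁ + (1/2)P₂)#γ` of Wasserstein geodesics, for `γ ∈ Π*(μ1, μ2)`. -/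
theorem WMean_eq_geodesic_middles {d : ℕ} (μ1 μ2 : Measure (Euc d))
    (h1 : μ1 ∈ (P2 : Set (Measure (Euc d)))) (h2 : μ2 ∈ (P2 : Set (Measure (Euc d)))) :
    WMean μ1 μ2 =
      (fun γ : Measure (Euc d × Euc d) =>
        γ.map (fun p => (1 / 2 : ℝ) • p.1 + (1 / 2 : ℝ) • p.2)) '' OptPlan μ1 μ2 := by
  rw [← planMiddle_eq_map_smul_add_smul]
  exact WMean_eq_geodesic_middles_general h1 h2

end
end
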